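/- arXiv:1404.4648 — 3 statements merged into one kernel-verified Lean document; each statement's English description precedes it below -/
import Mathlib

section
/- Let K be a number field that is Galois over ℚ with cyclic Galois group generated by σ, with ring of integers 𝓞. Every nonzero γ ∈ 𝓞 can be written as γ = n·α where n is a positive rational integer and α ∈ 𝓞 is a visible point for π(γ) = γ/σ(γ); moreover this representation is unique: if n·α = m·α′ with n, m positive integers and α, α′ both visible points for γ/σ(γ), then n = m and α = α′. -/
open NumberField

/-- A nonzero algebraic integer `α` is a *visible point* for `β` (of norm `1`) if
`α / σ α = β` and `|N(α)|` is minimal among nonzero algebraic integers mapping to `β`. -/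
def IsVisiblePoint (K : Type*) [Field K] [NumberField K]
    (σ : K ≃ₐ[ℚ] K) (β : K) (α : 𝓞 K) : Prop :=
  α ≠ 0 ∧ (α : K) / σ (α : K) = β ∧
    ∀ γ : 𝓞 K, γ ≠ 0 → (γ : K) / σ (γ : K) = β →
      (Algebra.norm ℤ α).natAbs ≤ (Algebra.norm ℤ γ).natAbs

/-!
The quotient of two algebraic integers with the same image under `α ↦ α / σ α` is fixed by `σ`,
hence rational. If `α` is visible and `γ / α = a / d` in lowest terms, then `d ∣ α` by coprimality;
as `α / d` has the same image and a norm smaller by the factor `d ^ [K : ℚ]`, minimality forces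
`d = 1`. So every element of the fibre is an integer multiple of `α`, and the sign is absorbed
into `α`. Visible points of one fibre have equal absolute norm, so the multiplier is determined
by the norm.
-/

theorem mem_range_algebraMap_of_apply_eq_self_of_forall_mem_zpowers {F E : Type*} [Field F]
    [Field E] [Algebra F E] [IsGalois F E] {σ : E ≃ₐ[F] E}
    (hσ : ∀ τ : E ≃ₐ[F] E, τ ∈ Subgroup.zpowers σ) {x : E} (hx : σ x = x) :
    x ∈ Set.range (algebraMap F E) := by
  have zpowers_le_stabilizer :
      Subgroup.zpowers σ ≤ MulAction.stabilizer (E ≃ₐ[F] E) x :=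
    Subgroup.zpowers_le.2 hx
  exact (InfiniteGalois.mem_range_algebraMap_iff_fixed x).2 fun τ ↦ zpowers_le_stabilizer (hσ τ)

theorem map_div_eq_div_of_div_map_eq_div_map {E : Type*} [Field E] (f : E →+* E) {x y : E}
    (h : x / f x = y / f y) : f (x / y) = x / y := by
  rcases eq_or_ne x 0 with rfl | hx
  · simp
  rcases eq_or_ne y 0 with rfl | hy
  · simp
  have hfx : f x ≠ 0 := (map_ne_zero f).2 hx
  have hfy : f y ≠ 0 := (map_ne_zero f).2 hy
  rw [div_eq_div_iff hfx hfy] at h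
  rw [map_div₀, div_eq_div_iff hfy hy]
  linear_combination -h

theorem natAbs_norm_natCast_mul {R : Type*} [CommRing R] [Module.Free ℤ R] (n : ℕ) (x : R) :
    (Algebra.norm ℤ ((n : R) * x)).natAbs =
      n ^ Module.finrank ℤ R * (Algebra.norm ℤ x).natAbs := by
  rw [map_mul, Algebra.norm_natCast, Int.natAbs_mul, Int.natAbs_pow, Int.natAbs_natCast]

section NumberField

variable {K : Type*} [Field K] [NumberField K]

theorem natAbs_norm_pos {α : 𝓞 K} (hα : α ≠ 0) : 0 < (Algebra.norm ℤ α).natAbs :=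
  Int.natAbs_pos.2 (Algebra.norm_ne_zero_iff.2 hα)

theorem finrank_int_ringOfIntegers_ne_zero : Module.finrank ℤ (𝓞 K) ≠ 0 :=
  (RingOfIntegers.rank K).trans_ne Module.finrank_pos.ne'

theorem den_mul_eq_num_mul_of_div_eq_ratCast {α γ : 𝓞 K} (hα : α ≠ 0) {r : ℚ}
    (h : (γ : K) / α = r) : (r.den : 𝓞 K) * γ = (r.num : 𝓞 K) * α := by
  have hαK : (α : K) ≠ 0 := RingOfIntegers.coe_ne_zero_iff.2 hα
  have hden : (r.den : K) ≠ 0 := Nat.cast_ne_zero.2 r.den_ne_zero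
  rw [Rat.cast_def, div_eq_div_iff hαK hden] at h
  apply RingOfIntegers.ext
  simp only [map_mul, map_natCast, map_intCast]
  linear_combination h

theorem exists_isVisiblePoint (σ : K ≃ₐ[ℚ] K) {γ : 𝓞 K} (hγ : γ ≠ 0) :
    ∃ α, IsVisiblePoint K σ ((γ : K) / σ (γ : K)) α := by
  let fibre : Set (𝓞 K) := {α | α ≠ 0 ∧ (α : K) / σ (α : K) = (γ : K) / σ (γ : K)}
  let absNorm : 𝓞 K → ℕ := fun α ↦ (Algebra.norm ℤ α).natAbs
  have fibre_nonempty : fibre.Nonempty := ⟨γ, hγ, rfl⟩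
  obtain ⟨ne_zero, div_eq⟩ := Function.argminOn_mem absNorm fibre fibre_nonempty
  exact ⟨_, ne_zero, div_eq, fun δ hδ hδβ ↦ Function.argminOn_le absNorm fibre ⟨hδ, hδβ⟩⟩

namespace IsVisiblePoint

variable {σ : K ≃ₐ[ℚ] K} {β : K} {α α' γ : 𝓞 K}

theorem neg (hα : IsVisiblePoint K σ β α) : IsVisiblePoint K σ β (-α) := by
  obtain ⟨ne_zero, div_eq, norm_le⟩ := hα
  have norm_neg : (Algebra.norm ℤ (-α)).natAbs = (Algebra.norm ℤ α).natAbs := by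
    rw [← neg_one_mul, map_mul, Int.natAbs_mul,
      Int.isUnit_iff_natAbs_eq.1 (isUnit_one.neg.map (Algebra.norm ℤ)), one_mul]
  refine ⟨neg_ne_zero.2 ne_zero, ?_, norm_neg ▸ norm_le⟩
  simp only [map_neg, neg_div_neg_eq, div_eq]

theorem natAbs_norm_eq (hα : IsVisiblePoint K σ β α) (hα' : IsVisiblePoint K σ β α') :
    (Algebra.norm ℤ α).natAbs = (Algebra.norm ℤ α').natAbs :=
  le_antisymm (hα.2.2 α' hα'.1 hα'.2.1) (hα'.2.2 α hα.1 hα.2.1)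

theorem eq_one_of_natCast_dvd (hα : IsVisiblePoint K σ β α) {d : ℕ} (hd : (d : 𝓞 K) ∣ α) :
    d = 1 := by
  obtain ⟨δ, rfl⟩ := hd
  obtain ⟨ne_zero, div_eq, norm_le⟩ := hα
  have hd : (d : 𝓞 K) ≠ 0 := left_ne_zero_of_mul ne_zero
  have hδ : δ ≠ 0 := right_ne_zero_of_mul ne_zero
  have hδβ : (δ : K) / σ (δ : K) = β := by
    have hdK : (d : K) ≠ 0 := mod_cast hd
    simpa only [map_mul, map_natCast, mul_div_mul_left _ _ hdK] using div_eq
  have pow_mul_norm_le :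
      d ^ Module.finrank ℤ (𝓞 K) * (Algebra.norm ℤ δ).natAbs ≤ (Algebra.norm ℤ δ).natAbs :=
    natAbs_norm_natCast_mul d δ ▸ norm_le δ hδ hδβ
  have pow_le_one : d ^ Module.finrank ℤ (𝓞 K) ≤ 1 :=
    (mul_le_iff_le_one_left (natAbs_norm_pos hδ)).1 pow_mul_norm_le
  have d_le_one : d ≤ 1 := (pow_le_one_iff finrank_int_ringOfIntegers_ne_zero).1 pow_le_one
  exact le_antisymm d_le_one (Nat.one_le_iff_ne_zero.2 (Nat.cast_ne_zero.1 hd))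

theorem exists_eq_intCast_mul [IsGalois ℚ K] (hσ : ∀ τ : K ≃ₐ[ℚ] K, τ ∈ Subgroup.zpowers σ)
    (hα : IsVisiblePoint K σ β α) (hγ : (γ : K) / σ (γ : K) = β) :
    ∃ a : ℤ, γ = (a : 𝓞 K) * α := by
  have ratio_fixed : σ ((γ : K) / α) = (γ : K) / α :=
    map_div_eq_div_of_div_map_eq_div_map (σ : K →+* K) (hγ.trans hα.2.1.symm)
  obtain ⟨r, hr⟩ := mem_range_algebraMap_of_apply_eq_self_of_forall_mem_zpowers hσ ratio_fixed
  have den_mul : (r.den : 𝓞 K) * γ = (r.num : 𝓞 K) * α :=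
    den_mul_eq_num_mul_of_div_eq_ratCast hα.1 hr.symm
  have den_coprime_num : IsCoprime (r.den : 𝓞 K) (r.num : 𝓞 K) :=
    mod_cast r.isCoprime_num_den.symm.intCast
  have den_dvd : (r.den : 𝓞 K) ∣ α := den_coprime_num.dvd_of_dvd_mul_left ⟨γ, den_mul.symm⟩
  have den_eq_one : r.den = 1 := hα.eq_one_of_natCast_dvd den_dvd
  exact ⟨r.num, by rw [← den_mul, den_eq_one, Nat.cast_one, one_mul]⟩

theorem exists_eq_natCast_mul [IsGalois ℚ K] (hσ : ∀ τ : K ≃ₐ[ℚ] K, τ ∈ Subgroup.zpowers σ)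
    (hα : IsVisiblePoint K σ β α) (hγ : (γ : K) / σ (γ : K) = β) :
    ∃ (n : ℕ) (α' : 𝓞 K), IsVisiblePoint K σ β α' ∧ γ = (n : 𝓞 K) * α' := by
  obtain ⟨a, rfl⟩ := hα.exists_eq_intCast_mul hσ hγ
  obtain ⟨n, rfl | rfl⟩ := a.eq_nat_or_neg
  · exact ⟨n, α, hα, by rw [Int.cast_natCast]⟩
  · exact ⟨n, -α, hα.neg, by rw [Int.cast_neg, Int.cast_natCast, neg_mul_comm]⟩

theorem natCast_mul_inj (hα : IsVisiblePoint K σ β α) (hα' : IsVisiblePoint K σ β α')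
    {n m : ℕ} (hn : n ≠ 0) (h : (n : 𝓞 K) * α = (m : 𝓞 K) * α') : n = m ∧ α = α' := by
  have pow_mul_norm_eq :
      n ^ Module.finrank ℤ (𝓞 K) * (Algebra.norm ℤ α).natAbs =
        m ^ Module.finrank ℤ (𝓞 K) * (Algebra.norm ℤ α).natAbs := by
    rw [← natAbs_norm_natCast_mul, h, natAbs_norm_natCast_mul, hα.natAbs_norm_eq hα']
  have pow_eq : n ^ Module.finrank ℤ (𝓞 K) = m ^ Module.finrank ℤ (𝓞 K) :=
    Nat.eq_of_mul_eq_mul_right (natAbs_norm_pos hα.1) pow_mul_norm_eq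
  obtain rfl : n = m := Nat.pow_left_injective finrank_int_ringOfIntegers_ne_zero pow_eq
  exact ⟨rfl, mul_left_cancel₀ (Nat.cast_ne_zero.2 hn) h⟩

end IsVisiblePoint

end NumberField

/-- Every nonzero algebraic integer `γ` is uniquely `γ = n • α` with `n` a
positive rational integer and `α` a visible point for `γ / σ γ`. -/
theorem exists_unique_visible_decomposition
    (K : Type*) [Field K] [NumberField K] [IsGalois ℚ K]
    (σ : K ≃ₐ[ℚ] K) (hσ : ∀ τ : K ≃ₐ[ℚ] K, τ ∈ Subgroup.zpowers σ)
    (γ : 𝓞 K) (hγ : γ ≠ 0) :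
    ∃ (n : ℕ) (α : 𝓞 K), 0 < n ∧ IsVisiblePoint K σ ((γ : K) / σ (γ : K)) α ∧
      γ = (n : 𝓞 K) * α ∧
      ∀ (m : ℕ) (α' : 𝓞 K), 0 < m → IsVisiblePoint K σ ((γ : K) / σ (γ : K)) α' →
        γ = (m : 𝓞 K) * α' → n = m ∧ α = α' := by
  obtain ⟨α₀, hα₀⟩ := exists_isVisiblePoint σ hγ
  obtain ⟨n, α, hα, hnα⟩ := hα₀.exists_eq_natCast_mul hσ rfl
  have hn : n ≠ 0 := by
    rintro rfl
    exact hγ (by rw [hnα, Nat.cast_zero, zero_mul])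
  exact ⟨n, α, Nat.pos_of_ne_zero hn, hα, hnα, fun m α' _ hα' hmα' ↦
    hα.natCast_mul_inj hα' hn (hnα.symm.trans hmα')⟩
end

section
/- Let K be a number field that is Galois over ℚ with cyclic Galois group generated by σ, with ring of integers 𝓞 and unit group U. For every real r > 0, the set Ñ(r) of classes β̃ ∈ Ñ with h(β̃) < r is finite, where Ñ = log 𝒩 / log U and h(β̃) = min{|N_{K/ℚ}(α)| : α ∈ 𝓞 nonzero, the class of log π(α) modulo log U equals β̃}. -/
open NumberField

/-- The logarithmic embedding `β ↦ (log ‖β‖_v)_{v | ∞}`, where `‖·‖_v` is the usual absolute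
value at a real place and its square at a complex place. -/
noncomputable def logMap (K : Type*) [Field K] [NumberField K] (β : K) :
    InfinitePlace K → ℝ :=
  fun w => Real.log ((w β) ^ w.mult)

/-- The kernel of the coordinate-sum map `Σ : ℝ^{r₁+r₂} → ℝ`. -/
noncomputable def sumKer (K : Type*) [Field K] [NumberField K] :
    AddSubgroup (InfinitePlace K → ℝ) where
  carrier := {x | ∑ w, x w = 0}
  add_mem' := by
    intro a b ha hb
    simp only [Set.mem_setOf_eq, Pi.add_apply] at *
    rw [Finset.sum_add_distrib, ha, hb, add_zero]
  zero_mem' := by simp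
  neg_mem' := by
    intro a ha
    simp only [Set.mem_setOf_eq, Pi.neg_apply] at *
    rw [Finset.sum_neg_distrib, ha, neg_zero]

/-- The image `log U` of the unit group under the logarithmic embedding, as a subgroup of
`ker Σ` (a lattice therein, by Dirichlet's unit theorem). -/
noncomputable def logUnits (K : Type*) [Field K] [NumberField K] :
    AddSubgroup (sumKer K) :=
  AddSubgroup.closure
    {x : sumKer K | ∃ u : (𝓞 K)ˣ, (x : InfinitePlace K → ℝ) = logMap K ((u : 𝓞 K) : K)}

/-- The torus `T = ker Σ / log U`. -/
noncomputable abbrev Torus (K : Type*) [Field K] [NumberField K] :=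
  sumKer K ⧸ logUnits K

/-- `Ñ = log 𝒩 / log U ⊆ T`, the image of the norm-one elements of `K` in `T`. -/
noncomputable def Ntilde (K : Type*) [Field K] [NumberField K] : Set (Torus K) :=
  {t | ∃ β : K, Algebra.norm ℚ β = 1 ∧ ∃ hb : logMap K β ∈ sumKer K,
    t = QuotientAddGroup.mk (⟨logMap K β, hb⟩ : sumKer K)}

/-- The height `h(β̃)` of a class `t ∈ T`: the least value of `|N(α)|` over nonzero algebraic
integers `α` with `log π(α) ≡ t (mod log U)`, where `π(α) = α / σ(α)`. -/
noncomputable def hclass (K : Type*) [Field K] [NumberField K]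
    (σ : K ≃ₐ[ℚ] K) (t : Torus K) : ℕ :=
  sInf {m : ℕ | ∃ γ : 𝓞 K, γ ≠ 0 ∧ m = (Algebra.norm ℤ γ).natAbs ∧
    ∃ hg : logMap K ((γ : K) / σ (γ : K)) ∈ sumKer K,
      QuotientAddGroup.mk (⟨logMap K ((γ : K) / σ (γ : K)), hg⟩ : sumKer K) = t}

/-!
If `α` and `α'` generate the same ideal of `𝓞`, then `α' = u α` for a unit `u`, and
`π(α') = π(u) π(α)` where `π(u) = u / σ(u)` is again a unit. So the class of `log π(α)` modulo
`log U` depends only on the ideal `(α)`, and only finitely many ideals have norm below a given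
bound. By Hilbert's Theorem 90, after clearing denominators by a rational integer, every class in
`Ñ` is the class of `log π(α)` for some nonzero `α ∈ 𝓞`; hence its height is attained and is the
norm of such an ideal.
-/

theorem norm_div_algEquiv {F L : Type*} [Field F] [Field L] [Algebra F L] [FiniteDimensional F L]
    (σ : L ≃ₐ[F] L) {x : L} (hx : x ≠ 0) : Algebra.norm F (x / σ x) = 1 := by
  rw [div_eq_mul_inv, map_mul, Algebra.norm_inv, Algebra.norm_eq_of_algEquiv,
    mul_inv_cancel₀ (Algebra.norm_ne_zero_iff.mpr hx)]

-- Mathlib's Hilbert 90 requires both fields in `Type`, so it is applied to a copy of `L` there.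
theorem exists_div_algEquiv_eq_of_norm_eq_one {F : Type} {L : Type*} [Field F] [Field L]
    [Algebra F L] [FiniteDimensional F L] [IsGalois F L] {σ : L ≃ₐ[F] L}
    (hσ : ∀ τ : L ≃ₐ[F] L, τ ∈ Subgroup.zpowers σ) {x : L} (hx : Algebra.norm F x = 1) :
    ∃ y : L, y ≠ 0 ∧ y / σ y = x := by
  have : Small.{0} L := Module.Finite.small.{0} F L
  let e : L ≃ₐ[F] Shrink.{0} L := (Shrink.algEquiv F L).symm
  have : IsGalois F (Shrink.{0} L) := IsGalois.of_algEquiv e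
  have generates (τ : Shrink.{0} L ≃ₐ[F] Shrink.{0} L) :
      τ ∈ Subgroup.zpowers (e.autCongr σ) := by
    rw [← e.autCongr.apply_symm_apply τ]
    obtain ⟨n, hn⟩ := Subgroup.mem_zpowers_iff.mp (hσ (e.autCongr.symm τ))
    exact ⟨n, by simp only [← hn, map_zpow]⟩
  have : IsCyclic (Shrink.{0} L ≃ₐ[F] Shrink.{0} L) := ⟨_, generates⟩
  obtain ⟨y, hy⟩ := groupCohomology.exists_div_of_norm_eq_one generates (x := e x)
    (by rw [Algebra.norm_eq_of_algEquiv, hx])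
  refine ⟨e.symm y, by simp, e.injective ?_⟩
  rw [← hy, map_div₀, e.apply_symm_apply]
  rfl

theorem finite_image_norm_le_of_associated {R α : Type*} [CommRing R] [IsDedekindDomain R]
    [CharZero R] [Module.Finite ℤ R] {f : R → α}
    (hf : ∀ a b, Associated a b → f a = f b) (n : ℕ) :
    (f '' {a | (Algebra.norm ℤ a).natAbs ≤ n}).Finite := by
  let principal (a : R) : Ideal R := Ideal.span {a}
  have : Nonempty α := ⟨f 0⟩
  obtain ⟨g, rfl⟩ : ∃ g : Ideal R → α, f = g ∘ principal :=
    (Function.factorsThrough_iff f).mp fun a b hab ↦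
      hf a b (Ideal.span_singleton_eq_span_singleton.mp hab)
  rw [Set.image_comp]
  refine ((Ideal.finite_setOfPred_absNorm_le n).subset ?_).image g
  rintro _ ⟨a, ha, rfl⟩
  exact (Ideal.absNorm_span_singleton a).trans_le ha

section NumberField

variable {K : Type*} [Field K] [NumberField K]

theorem logMap_mul {x y : K} (hx : x ≠ 0) (hy : y ≠ 0) :
    logMap K (x * y) = logMap K x + logMap K y := by
  funext w
  simp only [logMap, map_mul, mul_pow, Pi.add_apply]
  exact Real.log_mul (pow_ne_zero _ ((map_ne_zero w).mpr hx))
    (pow_ne_zero _ ((map_ne_zero w).mpr hy))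

theorem sum_logMap {x : K} (hx : x ≠ 0) :
    ∑ w, logMap K x w = Real.log |(Algebra.norm ℚ x : ℝ)| := by
  rw [← Rat.cast_abs, ← InfinitePlace.prod_eq_abs_norm,
    Real.log_prod fun w _ ↦ pow_ne_zero _ ((map_ne_zero w).mpr hx)]
  rfl

theorem logMap_div_algEquiv_mem_sumKer (σ : K ≃ₐ[ℚ] K) (x : K) :
    logMap K (x / σ x) ∈ sumKer K := by
  change ∑ w, logMap K (x / σ x) w = 0
  obtain rfl | hx := eq_or_ne x 0
  · simp [logMap, InfinitePlace.mult_ne_zero]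
  · have hdiv : x / σ x ≠ 0 := div_ne_zero hx ((map_ne_zero σ).mpr hx)
    simp [sum_logMap hdiv, norm_div_algEquiv σ hx]

/-- The class of `log π(x)` in the torus `T = ker Σ / log U`, where `π(x) = x / σ(x)`. At the junk
argument `x = 0` it is the class of `0`. -/
noncomputable def torusClass (σ : K ≃ₐ[ℚ] K) (x : K) : Torus K :=
  QuotientAddGroup.mk ⟨logMap K (x / σ x), logMap_div_algEquiv_mem_sumKer σ x⟩

variable (σ : K ≃ₐ[ℚ] K)

theorem torusClass_mul {x y : K} (hx : x ≠ 0) (hy : y ≠ 0) :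
    torusClass σ (x * y) = torusClass σ x + torusClass σ y := by
  have hlog : logMap K (x * y / σ (x * y)) = logMap K (x / σ x) + logMap K (y / σ y) := by
    rw [map_mul, mul_div_mul_comm, logMap_mul (div_ne_zero hx ((map_ne_zero σ).mpr hx))
      (div_ne_zero hy ((map_ne_zero σ).mpr hy))]
  exact congrArg QuotientAddGroup.mk (Subtype.ext hlog)

theorem exists_unit_eq_div_algEquiv (u : (𝓞 K)ˣ) :
    ∃ v : (𝓞 K)ˣ, ((v : 𝓞 K) : K) = ((u : 𝓞 K) : K) / σ ((u : 𝓞 K) : K) := by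
  let σu : (𝓞 K)ˣ := Units.map (RingOfIntegers.mapRingEquiv σ.toRingEquiv : 𝓞 K →* 𝓞 K) u
  refine ⟨u / σu, ?_⟩
  have hσu : ((σu : 𝓞 K) : K) = σ ((u : 𝓞 K) : K) := rfl
  have hmul : (((u / σu : (𝓞 K)ˣ) : 𝓞 K) : K) * ((σu : 𝓞 K) : K) = ((u : 𝓞 K) : K) := by
    rw [← map_mul, ← Units.val_mul, div_mul_cancel]
  rw [← hσu, eq_div_iff (by simp), hmul]

theorem torusClass_unit (u : (𝓞 K)ˣ) : torusClass σ ((u : 𝓞 K) : K) = 0 := by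
  obtain ⟨v, hv⟩ := exists_unit_eq_div_algEquiv σ u
  exact (QuotientAddGroup.eq_zero_iff _).mpr
    (AddSubgroup.subset_closure ⟨v, congrArg (logMap K) hv.symm⟩)

theorem torusClass_eq_of_associated {a b : 𝓞 K} (hab : Associated a b) :
    torusClass σ (a : K) = torusClass σ (b : K) := by
  obtain ⟨u, rfl⟩ := hab
  obtain rfl | ha := eq_or_ne a 0
  · rw [zero_mul]
  · have hmul : ((a * u : 𝓞 K) : K) = (a : K) * ((u : 𝓞 K) : K) := map_mul (algebraMap _ K) a u
    rw [hmul, torusClass_mul σ (by simpa using ha) (by simp), torusClass_unit, add_zero]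

theorem finite_torusClass_image_norm_le (n : ℕ) :
    ((fun a : 𝓞 K ↦ torusClass σ (a : K)) '' {a | (Algebra.norm ℤ a).natAbs ≤ n}).Finite :=
  finite_image_norm_le_of_associated (fun _ _ ↦ torusClass_eq_of_associated σ) n

theorem exists_ringOfIntegers_div_algEquiv_eq {x : K} (hx : x ≠ 0) :
    ∃ a : 𝓞 K, a ≠ 0 ∧ (a : K) / σ (a : K) = x / σ x := by
  have halg : IsAlgebraic ℤ x :=
    (IsFractionRing.isAlgebraic_iff ℤ ℚ K).mpr (Algebra.IsAlgebraic.isAlgebraic x)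
  obtain ⟨d, hd, hint⟩ := halg.exists_integral_multiple
  have hdK : (d : K) ≠ 0 := Int.cast_ne_zero.mpr hd
  refine ⟨⟨d • x, hint⟩, ?_, ?_⟩
  · exact RingOfIntegers.coe_ne_zero_iff.mp (smul_ne_zero hd hx)
  · change d • x / σ (d • x) = x / σ x
    rw [zsmul_eq_mul, map_mul, map_intCast, mul_div_mul_left _ _ hdK]

theorem hclass_eq_sInf (t : Torus K) :
    hclass K σ t = sInf {m : ℕ | ∃ a : 𝓞 K, a ≠ 0 ∧ torusClass σ (a : K) = t ∧
      (Algebra.norm ℤ a).natAbs = m} := by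
  refine congrArg sInf (Set.ext fun m ↦ exists_congr fun a ↦ and_congr_right fun _ ↦ ?_)
  exact ⟨fun ⟨hm, _, hat⟩ ↦ ⟨hat, hm.symm⟩,
    fun ⟨hat, hm⟩ ↦ ⟨hm.symm, logMap_div_algEquiv_mem_sumKer σ a, hat⟩⟩

variable {σ} [IsGalois ℚ K]

theorem exists_torusClass_eq_of_mem_Ntilde (hσ : ∀ τ : K ≃ₐ[ℚ] K, τ ∈ Subgroup.zpowers σ)
    {t : Torus K} (ht : t ∈ Ntilde K) : ∃ a : 𝓞 K, a ≠ 0 ∧ torusClass σ (a : K) = t := by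
  obtain ⟨β, hβ, _, rfl⟩ := ht
  obtain ⟨y, hy, hyβ⟩ := exists_div_algEquiv_eq_of_norm_eq_one hσ hβ
  obtain ⟨a, ha, hay⟩ := exists_ringOfIntegers_div_algEquiv_eq σ hy
  exact ⟨a, ha, congrArg QuotientAddGroup.mk
    (Subtype.ext (congrArg (logMap K) (hay.trans hyβ)))⟩

theorem exists_torusClass_eq_and_norm_eq_hclass (hσ : ∀ τ : K ≃ₐ[ℚ] K, τ ∈ Subgroup.zpowers σ)
    {t : Torus K} (ht : t ∈ Ntilde K) :
    ∃ a : 𝓞 K, torusClass σ (a : K) = t ∧ (Algebra.norm ℤ a).natAbs = hclass K σ t := by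
  obtain ⟨a, ha, hat⟩ := exists_torusClass_eq_of_mem_Ntilde hσ ht
  rw [hclass_eq_sInf]
  obtain ⟨b, -, hbt, hb⟩ := Nat.sInf_mem (s := {m : ℕ | ∃ a : 𝓞 K, a ≠ 0 ∧
    torusClass σ (a : K) = t ∧ (Algebra.norm ℤ a).natAbs = m}) ⟨_, a, ha, hat, rfl⟩
  exact ⟨b, hbt, hb⟩

end NumberField

/-- For every `r > 0`, the set `Ñ(r)` of classes `β̃ ∈ Ñ` with `h(β̃) < r`
is finite. -/
theorem ntilde_lt_finite
    (K : Type*) [Field K] [NumberField K] [IsGalois ℚ K]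
    (σ : K ≃ₐ[ℚ] K) (hσ : ∀ τ : K ≃ₐ[ℚ] K, τ ∈ Subgroup.zpowers σ)
    (r : ℝ) (hr : 0 < r) :
    {t : Torus K | t ∈ Ntilde K ∧ (hclass K σ t : ℝ) < r}.Finite := by
  refine (finite_torusClass_image_norm_le σ ⌈r⌉₊).subset ?_
  rintro t ⟨ht, hlt⟩
  obtain ⟨a, hat, hnorm⟩ := exists_torusClass_eq_and_norm_eq_hclass hσ ht
  have hbound : hclass K σ t ≤ ⌈r⌉₊ := Nat.cast_le.mp (hlt.le.trans (Nat.le_ceil r))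
  exact ⟨a, hnorm.trans_le hbound, hat⟩
end

section
/- Let K be a number field that is Galois over ℚ with cyclic Galois group generated by σ, and let T = ker Σ / log U, a compact abelian topological group. For every nontrivial continuous character χ : T → 𝕋 (the unit circle), the Weyl sum over classes of bounded height satisfies Σ_{β̃ ∈ Ñ(r)} χ(β̃) = o(r) as r → ∞. -/
open NumberField

/-!
The class of `log π(α)` in `T` only depends on the principal ideal `(α)`, so by Hilbert 90 the Weyl
sum runs over the classes of principal ideals of norm less than `r`.

The sum of `χ(log π(α))` over the principal multiples `(α)` of a fixed ideal `J` is `o(r)`: counting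
lattice points in the fundamental cone shows that the sum, damped near norm zero, is asymptotic to
`c r / N J` with `c` independent of `J`, and multiplication by a fixed `γ` with `χ(log π(γ)) ≠ 1`
forces `c = 0`. Such a `γ` exists because `K` is dense in `∏ K_v` and `y ↦ y - σ y` maps onto
`ker Σ`.

If `K` has a real place, two integers `a`, `b` of the same class differ by an element `a / b` whose
ideal is `σ`-invariant, so each class has a unique principal ideal of least norm, and those ideals
are cut out by sieving with `σ`-invariant ideals. The reciprocal norms of invariant ideals are
summable, so finitely many of them sieve up to an error `ε r`, and inclusion-exclusion applies.

If `K` has no real place, let `c` be complex conjugation. Then `2 log π(α) = log π(α c(α))` only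
depends on the ideal `(α) c(α)`, which does not change when a prime factor `P` is traded for `c P`.
Since the reciprocal norms of a set of representatives of the pairs `{P, c P}` have divergent sum,
these ideals have density zero, and so do the classes.
-/

namespace WeylSum

open InfinitePlace Filter Topology Module

section CyclicPermutation

variable {G ι k : Type*} [Group G] [MulAction G ι] {g : G}

lemma apply_smul_eq_of_mem_zpowers {c : ι → k} (hc : ∀ i, c (g • i) = c i) {h : G}
    (hh : h ∈ Subgroup.zpowers g) (i : ι) : c (h • i) = c i := by
  obtain ⟨n, rfl⟩ := Subgroup.mem_zpowers_iff.mp hh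
  clear hh
  induction n generalizing i with
  | zero => simp
  | succ n ih => rw [zpow_add_one, mul_smul, ih, hc]
  | pred n ih => rw [zpow_sub_one, mul_smul, ih, ← hc, smul_inv_smul]

lemma exists_sub_comp_smul_eq_of_sum_eq_zero [Field k] [Fintype ι] [MulAction.IsPretransitive G ι]
    (hg : ∀ h : G, h ∈ Subgroup.zpowers g) {x : ι → k} (hx : ∑ i, x i = 0) :
    ∃ y : ι → k, ∀ i, y i - y (g • i) = x i := by
  classical
  let D : (ι → k) →ₗ[k] (ι → k) := LinearMap.id - LinearMap.funLeft k k (g • ·)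
  suffices hD : x ∈ LinearMap.range D by
    obtain ⟨y, rfl⟩ := hD
    exact ⟨y, fun _ ↦ rfl⟩
  by_contra hxD
  obtain ⟨f, hfx, hfD⟩ := Submodule.exists_le_ker_of_notMem hxD
  have hf_single (i j : ι) : f (Pi.single i 1) = f (Pi.single j 1) := by
    obtain ⟨h, rfl⟩ := MulAction.exists_smul_eq G j i
    refine apply_smul_eq_of_mem_zpowers (c := fun i ↦ f (Pi.single i 1)) (fun i ↦ ?_) (hg h) j
    have hDi : D (Pi.single (g • i) 1) = Pi.single (g • i) 1 - Pi.single i 1 := by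
      ext j
      simp [D, LinearMap.funLeft_apply, Pi.single_apply]
    have : f (D (Pi.single (g • i) 1)) = 0 := hfD (LinearMap.mem_range_self D _)
    rwa [hDi, map_sub, sub_eq_zero] at this
  apply hfx
  cases isEmpty_or_nonempty ι with
  | inl _ => rw [Subsingleton.elim x 0, map_zero]
  | inr h =>
    calc f x = ∑ i, x i • f (Pi.single i 1) := by
          conv_lhs => rw [pi_eq_sum_univ' x, map_sum]
          simp [Pi.single]
      _ = (∑ i, x i) • f (Pi.single h.some 1) := by
          simp only [fun i ↦ hf_single i h.some, Finset.sum_smul]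
      _ = 0 := by rw [hx, zero_smul]

end CyclicPermutation

lemma exists_span_singleton_eq {R : Type*} [CommRing R] {I : Ideal R} (hI : I ≠ ⊥)
    (h : I.IsPrincipal) :
    ∃ a : R, a ≠ 0 ∧ Ideal.span {a} = I := by
  obtain ⟨a, rfl⟩ := h
  exact ⟨a, fun ha ↦ hI (by simp [ha]), rfl⟩

/-! ### The class of `log π(α)` in the torus -/

section LogPi

variable {K : Type*} [Field K] [NumberField K]

lemma mult_smul (σ : K ≃ₐ[ℚ] K) (w : InfinitePlace K) : (σ • w).mult = w.mult := by
  unfold InfinitePlace.mult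
  congr 1
  exact propext isReal_smul_iff

lemma logMap_one : logMap K 1 = 0 := by
  ext w
  simp [logMap]

lemma logMap_mul {a b : K} (ha : a ≠ 0) (hb : b ≠ 0) :
    logMap K (a * b) = logMap K a + logMap K b := by
  ext w
  rw [Pi.add_apply, logMap, logMap, logMap, map_mul, mul_pow, Real.log_mul] <;> simp [ha, hb]

lemma logMap_div {a b : K} (ha : a ≠ 0) (hb : b ≠ 0) :
    logMap K (a / b) = logMap K a - logMap K b := by
  rw [eq_sub_iff_add_eq, ← logMap_mul (div_ne_zero ha hb) hb, div_mul_cancel₀ _ hb]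

lemma logMap_algEquiv (σ : K ≃ₐ[ℚ] K) (a : K) (w : InfinitePlace K) :
    logMap K (σ a) w = logMap K a (σ⁻¹ • w) := by
  simp only [logMap, mult_smul]
  rfl

/-- The map `y ↦ y - σ y` on `ℝ^{r₁+r₂}`, which carries `log α` to `log π(α)`. The place
`σ⁻¹ • w` is `w ∘ σ`. -/
noncomputable def coboundary (σ : K ≃ₐ[ℚ] K) : (InfinitePlace K → ℝ) →+ sumKer K where
  toFun y := ⟨fun w ↦ y w - y (σ⁻¹ • w), by
    change ∑ w, (y w - y (σ⁻¹ • w)) = 0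
    rw [Finset.sum_sub_distrib, sub_eq_zero]
    exact (Equiv.sum_comp (MulAction.toPerm σ⁻¹) y).symm⟩
  map_zero' := by ext; simp
  map_add' y z := by ext; simp; ring

lemma coboundary_apply (σ : K ≃ₐ[ℚ] K) (y : InfinitePlace K → ℝ) (w : InfinitePlace K) :
    (coboundary σ y : InfinitePlace K → ℝ) w = y w - y (σ⁻¹ • w) := rfl

lemma continuous_coboundary (σ : K ≃ₐ[ℚ] K) : Continuous (coboundary σ) :=
  Continuous.subtype_mk (by fun_prop) _

lemma coboundary_surjective [IsGalois ℚ K] {σ : K ≃ₐ[ℚ] K}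
    (hσ : ∀ τ : K ≃ₐ[ℚ] K, τ ∈ Subgroup.zpowers σ) : Function.Surjective (coboundary σ) := by
  have : MulAction.IsPretransitive (K ≃ₐ[ℚ] K) (InfinitePlace K) :=
    ⟨fun _ _ ↦ exists_smul_eq_of_comap_eq (k := ℚ) (Subsingleton.elim _ _)⟩
  intro x
  obtain ⟨y, hy⟩ := exists_sub_comp_smul_eq_of_sum_eq_zero (g := σ⁻¹)
    (fun τ ↦ by rw [Subgroup.zpowers_inv]; exact hσ τ) x.2
  exact ⟨y, Subtype.ext (funext hy)⟩

lemma coe_coboundary_logMap (σ : K ≃ₐ[ℚ] K) {a : K} (ha : a ≠ 0) :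
    (coboundary σ (logMap K a) : InfinitePlace K → ℝ) = logMap K (a / σ a) := by
  rw [logMap_div ha (by simpa using ha)]
  ext w
  rw [coboundary_apply, Pi.sub_apply, logMap_algEquiv]

/-- The class in the torus of `log π(a)`, where `π(a) = a / σ(a)`. -/
noncomputable def logPi (σ : K ≃ₐ[ℚ] K) (a : K) : Torus K :=
  QuotientAddGroup.mk (coboundary σ (logMap K a))

lemma logMap_div_algEquiv_mem_sumKer (σ : K ≃ₐ[ℚ] K) {a : K} (ha : a ≠ 0) :
    logMap K (a / σ a) ∈ sumKer K :=
  coe_coboundary_logMap σ ha ▸ (coboundary σ _).2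

lemma mk_logMap_div_eq_logPi (σ : K ≃ₐ[ℚ] K) {a : K} (ha : a ≠ 0)
    (h : logMap K (a / σ a) ∈ sumKer K) :
    (QuotientAddGroup.mk (⟨logMap K (a / σ a), h⟩ : sumKer K) : Torus K) = logPi σ a :=
  congrArg _ (Subtype.ext (coe_coboundary_logMap σ ha).symm)

lemma logPi_mul (σ : K ≃ₐ[ℚ] K) {a b : K} (ha : a ≠ 0) (hb : b ≠ 0) :
    logPi σ (a * b) = logPi σ a + logPi σ b := by
  rw [logPi, logMap_mul ha hb, map_add, QuotientAddGroup.mk_add, logPi, logPi]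

lemma logPi_integer_mul (σ : K ≃ₐ[ℚ] K) {a b : 𝓞 K} (ha : a ≠ 0) (hb : b ≠ 0) :
    logPi σ ((a * b : 𝓞 K) : K) = logPi σ (a : K) + logPi σ (b : K) := by
  rw [← logPi_mul σ (by simpa using ha) (by simpa using hb)]
  rfl

lemma logPi_eq_zero_of_algEquiv_eq_self {σ : K ≃ₐ[ℚ] K} {a : K} (ha : a ≠ 0) (h : σ a = a) :
    logPi σ a = 0 := by
  rw [← mk_logMap_div_eq_logPi σ ha (logMap_div_algEquiv_mem_sumKer σ ha),
    QuotientAddGroup.eq_zero_iff]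
  convert! (logUnits K).zero_mem using 1
  exact Subtype.ext (by simp only [h, div_self ha, logMap_one]; rfl)

lemma logPi_pow (σ : K ≃ₐ[ℚ] K) {a : K} (ha : a ≠ 0) (n : ℕ) :
    logPi σ (a ^ n) = n • logPi σ a := by
  induction n with
  | zero => rw [pow_zero, zero_nsmul, logPi_eq_zero_of_algEquiv_eq_self one_ne_zero (map_one σ)]
  | succ n ih => rw [pow_succ, logPi_mul σ (pow_ne_zero n ha) ha, ih, succ_nsmul]

lemma mem_logUnits_iff {x : sumKer K} :
    x ∈ logUnits K ↔ ∃ u : (𝓞 K)ˣ, (x : InfinitePlace K → ℝ) = logMap K ((u : 𝓞 K) : K) := by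
  have coe_ne_zero (u : (𝓞 K)ˣ) : ((u : 𝓞 K) : K) ≠ 0 := by simp
  refine ⟨fun h ↦ ?_, fun h ↦ AddSubgroup.subset_closure h⟩
  induction h using AddSubgroup.closure_induction with
  | mem _ hx => exact hx
  | zero => exact ⟨1, by simp [logMap_one]⟩
  | add x y _ _ hx hy =>
    obtain ⟨⟨u, hu⟩, v, hv⟩ := And.intro hx hy
    exact ⟨u * v, by simp [logMap_mul, hu, hv]⟩
  | neg x _ hx =>
    obtain ⟨u, hu⟩ := hx
    refine ⟨u⁻¹, ?_⟩
    rw [AddSubgroup.coe_neg, hu, neg_eq_iff_add_eq_zero,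
      ← logMap_mul (coe_ne_zero _) (coe_ne_zero _), ← map_mul, Units.mul_inv, map_one, logMap_one]

lemma logPi_units (σ : K ≃ₐ[ℚ] K) (u : (𝓞 K)ˣ) : logPi σ ((u : 𝓞 K) : K) = 0 := by
  rw [logPi, QuotientAddGroup.eq_zero_iff, mem_logUnits_iff, coe_coboundary_logMap σ (by simp)]
  let v : (𝓞 K)ˣ := Units.map (RingOfIntegers.mapRingEquiv (σ : K ≃+* K) : 𝓞 K →* 𝓞 K) u
  refine ⟨u / v, congrArg _ ?_⟩
  rw [div_eq_iff (by simp)]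
  change _ = _ * ((v : 𝓞 K) : K)
  rw [← map_mul, ← Units.val_mul, div_mul_cancel]

lemma logPi_eq_of_associated (σ : K ≃ₐ[ℚ] K) {a b : 𝓞 K} (ha : a ≠ 0) (h : Associated a b) :
    logPi σ (b : K) = logPi σ (a : K) := by
  obtain ⟨u, rfl⟩ := h
  rw [logPi_integer_mul σ ha u.ne_zero, logPi_units, add_zero]

open Classical in
/-- `logPi` of a generator of the principal ideal `I`, with the junk value `0` when `I` is not
principal. -/
noncomputable def logPiIdeal (σ : K ≃ₐ[ℚ] K) (I : Ideal (𝓞 K)) : Torus K :=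
  if _h : I.IsPrincipal then logPi σ (Submodule.IsPrincipal.generator I : 𝓞 K) else 0

lemma logPiIdeal_span_singleton (σ : K ≃ₐ[ℚ] K) {a : 𝓞 K} (ha : a ≠ 0) :
    logPiIdeal σ (Ideal.span {a}) = logPi σ (a : K) := by
  have h : (Ideal.span {a}).IsPrincipal := ⟨⟨a, rfl⟩⟩
  rw [logPiIdeal, dif_pos h]
  refine logPi_eq_of_associated σ ha ?_
  rw [← Ideal.span_singleton_eq_span_singleton]
  exact (Submodule.IsPrincipal.span_singleton_generator (Ideal.span {a})).symm

lemma logPiIdeal_mul (σ : K ≃ₐ[ℚ] K) {I J : Ideal (𝓞 K)} (hI : I ≠ ⊥) (hJ : J ≠ ⊥)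
    (hI' : I.IsPrincipal) (hJ' : J.IsPrincipal) :
    logPiIdeal σ (I * J) = logPiIdeal σ I + logPiIdeal σ J := by
  obtain ⟨a, ha, rfl⟩ := exists_span_singleton_eq hI hI'
  obtain ⟨b, hb, rfl⟩ := exists_span_singleton_eq hJ hJ'
  rw [Ideal.span_singleton_mul_span_singleton, logPiIdeal_span_singleton σ (mul_ne_zero ha hb),
    logPiIdeal_span_singleton σ ha, logPiIdeal_span_singleton σ hb,
    logPi_integer_mul σ ha hb]

end LogPi

/-! ### Detecting characters on algebraic integers -/

section Density

lemma exists_log_norm_pow_mem_of_denseRange {α ι : Type*} [Finite ι] {E : ι → Type*}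
    [∀ i, NormedAddCommGroup (E i)] {f : α → ∀ i, E i} (hf : DenseRange f) (m : ι → ℕ)
    {V : Set (ι → ℝ)} (hV : IsOpen V) {x : ∀ i, E i} (hx : ∀ i, x i ≠ 0)
    (hxV : (fun i ↦ Real.log (‖x i‖ ^ m i)) ∈ V) :
    ∃ a, (fun i ↦ Real.log (‖f a i‖ ^ m i)) ∈ V ∧ ∀ i, f a i ≠ 0 := by
  have hlog : ContinuousAt (fun (z : ∀ i, E i) i ↦ Real.log (‖z i‖ ^ m i)) x :=
    continuousAt_pi.mpr fun i ↦ ((continuous_apply i).norm.pow (m i)).continuousAt.log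
      (pow_ne_zero _ (norm_ne_zero_iff.mpr (hx i)))
  exact hf.mem_nhds ((hlog.eventually (hV.mem_nhds hxV)).and
    (eventually_all.mpr fun i ↦ (continuous_apply i).continuousAt.eventually_ne (hx i)))

lemma place_ratCast {K : Type*} [Field K] [CharZero K] (w : InfinitePlace K) (q : ℚ) :
    w (q : K) = |(q : ℝ)| := by
  rw [← InfinitePlace.norm_embedding_eq w (q : K), map_ratCast, Complex.norm_ratCast]

variable {K : Type*} [Field K] [NumberField K]

lemma dense_image_logMap : Dense (logMap K '' {0}ᶜ) := by
  refine dense_iff_inter_open.mpr fun V hV ⟨y, hy⟩ ↦ ?_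
  have hexp : (fun w : InfinitePlace K ↦ Real.log (‖Real.exp (y w / w.mult)‖ ^ w.mult)) = y := by
    ext w
    rw [Real.norm_of_nonneg (Real.exp_pos _).le, ← Real.exp_nat_mul, Real.log_exp,
      mul_div_cancel₀ _ (by simp)]
  obtain ⟨q, hqV, hq⟩ := exists_log_norm_pow_mem_of_denseRange
    (DenseRange.piMap fun _ : InfinitePlace K ↦ Rat.denseRange_cast (𝕜 := ℝ)) mult hV
    (fun w ↦ (Real.exp_pos (y w / w.mult)).ne') (by rwa [hexp])
  have hnorm (w : InfinitePlace K) : ‖WithAbs.toAbs w.1 (q w : K)‖ = ‖(q w : ℝ)‖ :=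
    place_ratCast w (q w)
  obtain ⟨a, haV, ha⟩ := exists_log_norm_pow_mem_of_denseRange
    (denseRange_algebraMap_pi (K := K)) mult hV (x := fun w ↦ WithAbs.toAbs w.1 (q w : K))
    (fun w ↦ norm_ne_zero_iff.mp (by rw [hnorm]; exact norm_ne_zero_iff.mpr (hq w)))
    (by simp only [hnorm]; exact hqV)
  exact ⟨logMap K a, haV, a, fun h ↦ ha (Classical.arbitrary _) (by simp [show a = 0 from h]), rfl⟩

lemma exists_integer_logPi_eq (σ : K ≃ₐ[ℚ] K) {a : K} (ha : a ≠ 0) :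
    ∃ b : 𝓞 K, b ≠ 0 ∧ logPi σ (b : K) = logPi σ a := by
  obtain ⟨m, hm, hma⟩ := ((IsFractionRing.isAlgebraic_iff ℤ ℚ K).mpr
    (Algebra.IsAlgebraic.isAlgebraic (R := ℚ) a)).exists_integral_multiple
  have hm' : (m : K) ≠ 0 := Int.cast_ne_zero.mpr hm
  refine ⟨⟨m • a, hma⟩, ?_, ?_⟩
  · exact fun h ↦ smul_ne_zero hm ha (congrArg (RingOfIntegers.val) h)
  · change logPi σ (m • a) = _
    rw [zsmul_eq_mul, logPi_mul σ hm' ha, logPi_eq_zero_of_algEquiv_eq_self hm' (map_intCast σ m),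
      zero_add]

variable {χ : AddChar (Torus K) Circle}

lemma exists_integer_logPi_ne_one [IsGalois ℚ K] {σ : K ≃ₐ[ℚ] K}
    (hσ : ∀ τ : K ≃ₐ[ℚ] K, τ ∈ Subgroup.zpowers σ) (hχ : Continuous χ) (hχ_ne : χ ≠ 1) :
    ∃ γ : 𝓞 K, γ ≠ 0 ∧ χ (logPi σ (γ : K)) ≠ 1 := by
  by_contra! htriv
  refine hχ_ne (DFunLike.ext _ _ fun t ↦ ?_)
  obtain ⟨x, rfl⟩ := QuotientAddGroup.mk_surjective t
  obtain ⟨y, rfl⟩ := coboundary_surjective hσ x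
  have hcont : Continuous fun y ↦ χ (QuotientAddGroup.mk (coboundary σ y)) :=
    hχ.comp (continuous_quot_mk.comp (continuous_coboundary σ))
  refine congrFun (hcont.ext_on dense_image_logMap continuous_const ?_) y
  rintro _ ⟨a, ha, rfl⟩
  obtain ⟨b, hb, hba⟩ := exists_integer_logPi_eq σ ha
  change χ (logPi σ a) = 1
  rw [← hba, htriv b hb]

lemma pow_ne_one_of_nsmul_surjective {A M : Type*} [AddMonoid A] [CommMonoid M] {ψ : AddChar A M}
    (hψ : ψ ≠ 1) {n : ℕ} (hn : Function.Surjective fun a : A ↦ n • a) : ψ ^ n ≠ 1 := by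
  obtain ⟨a, ha⟩ := AddChar.ne_one_iff.mp hψ
  obtain ⟨b, rfl⟩ := hn a
  exact AddChar.ne_one_iff.mpr ⟨b, by rwa [AddChar.pow_apply, ← AddChar.map_nsmul_eq_pow]⟩

lemma torus_nsmul_surjective {n : ℕ} (hn : n ≠ 0) :
    Function.Surjective fun t : Torus K ↦ n • t := by
  intro t
  obtain ⟨x, rfl⟩ := QuotientAddGroup.mk_surjective t
  have hx : ∑ w, (x : InfinitePlace K → ℝ) w = 0 := x.2
  refine ⟨QuotientAddGroup.mk ⟨(n : ℝ)⁻¹ • x, ?_⟩, congrArg QuotientAddGroup.mk (Subtype.ext ?_)⟩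
  · change ∑ w, (n : ℝ)⁻¹ * (x : InfinitePlace K → ℝ) w = 0
    rw [← Finset.mul_sum, hx, mul_zero]
  · ext w
    simp [hn]

end Density

/-! ### Sums of continuous functions over lattice points -/

section LatticeSums

open MeasureTheory ZLattice Bornology
open scoped Pointwise

section EuclideanSpace

variable {E : Type*} [NormedAddCommGroup E] [InnerProductSpace ℝ E] [FiniteDimensional ℝ E]
  (L : Submodule ℤ E) [DiscreteTopology L] [IsZLattice ℝ L]

lemma equivFunL_mem_smul_span_iff {ι : Type*} [Finite ι] (b : Basis ι ℤ L) (s : Set E) {n : ℕ}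
    (hn : n ≠ 0) (x : E) :
    x ∈ s ∩ (n : ℝ)⁻¹ • (L : Set E) ↔ (b.ofZLatticeBasis ℝ L).equivFunL x ∈
      (b.ofZLatticeBasis ℝ L).equivFunL '' s ∩
        (n : ℝ)⁻¹ • (Submodule.span ℤ (Set.range (Pi.basisFun ℝ ι)) : Set (ι → ℝ)) := by
  have hn' : (n : ℝ) ≠ 0 := Nat.cast_ne_zero.mpr hn
  rw [Set.mem_inter_iff, Set.mem_inter_iff, (EquivLike.injective _).mem_set_image,
    Set.mem_inv_smul_set_iff₀ hn', Set.mem_inv_smul_set_iff₀ hn', ← map_smul, SetLike.mem_coe,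
    SetLike.mem_coe]
  nth_rewrite 1 [← b.ofZLatticeBasis_span ℝ]
  simp only [Basis.mem_span_iff_repr_mem, Pi.basisFun_repr, Basis.equivFunL_apply]

variable {ι : Type*} [Fintype ι] (b : Basis ι ℤ L) [MeasurableSpace E] [BorelSpace E]

lemma map_equivFunL_symm_volume :
    (volume : Measure (ι → ℝ)).map (b.ofZLatticeBasis ℝ L).equivFunL.symm =
      (ENNReal.ofReal (covolume L))⁻¹ • volume := by
  let e := (b.ofZLatticeBasis ℝ L).equivFunL.toHomeomorph.toMeasurableEquiv
  change volume.map e.symm = _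
  ext t ht
  rw [MeasurableEquiv.map_apply, Measure.smul_apply, smul_eq_mul,
    ← MeasurableEquiv.image_eq_preimage_symm, mul_comm, ← div_eq_mul_inv]
  exact volume_image_eq_volume_div_covolume' L b ht.nullMeasurableSet

lemma setIntegral_image_equivFunL (s : Set E) (F : E → ℝ) :
    ∫ y in (b.ofZLatticeBasis ℝ L).equivFunL '' s, F ((b.ofZLatticeBasis ℝ L).equivFunL.symm y) =
      (∫ x in s, F x) / covolume L := by
  let e := (b.ofZLatticeBasis ℝ L).equivFunL
  calc ∫ y in e '' s, F (e.symm y)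
      = ∫ y in e.symm ⁻¹' s, F (e.symm y) := by rw [e.image_eq_preimage_symm]
    _ = ∫ x in s, F x ∂(volume.map e.symm) :=
        (e.symm.toHomeomorph.measurableEmbedding.setIntegral_map F s).symm
    _ = _ := by
        rw [map_equivFunL_symm_volume, Measure.restrict_smul, integral_smul_measure,
          ENNReal.toReal_inv, ENNReal.toReal_ofReal (covolume_pos L volume).le, smul_eq_mul,
          inv_mul_eq_div]

lemma volume_frontier_image_equivFunL {s : Set E} (hs : volume (frontier s) = 0) :
    volume (frontier ((b.ofZLatticeBasis ℝ L).equivFunL '' s)) = 0 := by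
  have h := volume_image_eq_volume_div_covolume' L b (s := frontier s)
    measurableSet_frontier.nullMeasurableSet
  rw [hs, ENNReal.zero_div] at h
  rwa [← ContinuousLinearEquiv.coe_toHomeomorph, ← Homeomorph.image_frontier]

lemma tendsto_tsum_lattice_div_pow {s : Set E} (hs_bdd : IsBounded s) (hs_meas : MeasurableSet s)
    (hs_frontier : volume (frontier s) = 0) {F : E → ℝ} (hF : Continuous F) :
    Tendsto (fun n : ℕ ↦ (∑' x : ↑(s ∩ (n : ℝ)⁻¹ • (L : Set E)), F x) / (n : ℝ) ^ finrank ℝ E)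
      atTop (𝓝 ((∫ x in s, F x) / covolume L)) := by
  let b := Module.Free.chooseBasis ℤ L
  let e := (b.ofZLatticeBasis ℝ L).equivFunL
  have hcard : Fintype.card (Module.Free.ChooseBasisIndex ℤ L) = finrank ℝ E := by
    rw [← Module.finrank_eq_card_chooseBasisIndex, ZLattice.rank ℝ L]
  have hbdd : IsBounded (e '' s) := by
    rw [← NormedSpace.isVonNBounded_iff ℝ] at hs_bdd ⊢
    exact hs_bdd.image e.toContinuousLinearMap
  have hmeas : MeasurableSet (e '' s) :=
    e.toHomeomorph.toMeasurableEquiv.measurableSet_image.mpr hs_meas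
  rw [← setIntegral_image_equivFunL L b, ← hcard]
  refine (tendsto_tsum_div_pow_atTop_integral (e '' s) (fun y ↦ F (e.symm y))
    (hF.comp e.symm.continuous) hbdd hmeas
    (volume_frontier_image_equivFunL L b hs_frontier)).congr' ?_
  filter_upwards [eventually_ne_atTop 0] with n hn
  congr 1
  refine ((e.toEquiv.subtypeEquiv (equivFunL_mem_smul_span_iff L b s hn)).tsum_eq _).symm.trans
    (tsum_congr fun x ↦ congrArg F (e.symm_apply_apply x))

end EuclideanSpace

open mixedEmbedding euclidean fundamentalCone
open scoped nonZeroDivisors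

variable {K : Type*} [Field K] [NumberField K]

open Classical in
lemma covolume_idealLattice_eq_mul_absNorm (J : (Ideal (𝓞 K))⁰) :
    covolume (idealLattice K (FractionalIdeal.mk0 K J)) =
      covolume (idealLattice K (FractionalIdeal.mk0 K 1)) *
        Ideal.absNorm (J : Ideal (𝓞 K)) := by
  rw [covolume_idealLattice, covolume_idealLattice]
  simp [FractionalIdeal.coeIdeal_absNorm, mul_comm, mul_assoc, mul_left_comm]

open Classical in
lemma tendsto_tsum_idealLattice_div_pow (J : (Ideal (𝓞 K))⁰) {F : mixedSpace K → ℝ}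
    (hF : Continuous F) :
    Tendsto (fun n : ℕ ↦ (∑' x : ↑(normLeOne K ∩ (n : ℝ)⁻¹ •
        (idealLattice K (FractionalIdeal.mk0 K J) : Set (mixedSpace K))), F x) /
          (n : ℝ) ^ finrank ℚ K)
      atTop (𝓝 ((∫ x in normLeOne K, F x) / (covolume (idealLattice K (FractionalIdeal.mk0 K 1)) *
        Ideal.absNorm (J : Ideal (𝓞 K))))) := by
  have hfrontier : volume (frontier (toMixed K ⁻¹' normLeOne K)) = 0 := by
    rw [← (toMixed K).coe_toHomeomorph, ← Homeomorph.preimage_frontier,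
      (toMixed K).coe_toHomeomorph, (volumePreserving_toMixed K).measure_preimage
        measurableSet_frontier.nullMeasurableSet, volume_frontier_normLeOne]
  have hintegral : ∫ x in toMixed K ⁻¹' normLeOne K, F (toMixed K x) = ∫ x in normLeOne K, F x :=
    (volumePreserving_toMixed K).setIntegral_preimage_emb
      (toMixed K).toHomeomorph.measurableEmbedding F _
  have hlim := tendsto_tsum_lattice_div_pow
    (ZLattice.comap ℝ (idealLattice K (FractionalIdeal.mk0 K J)) (toMixed K).toLinearMap)
    ((toMixed K).antilipschitz.isBounded_preimage (isBounded_normLeOne K))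
    ((toMixed K).continuous.measurable (measurableSet_normLeOne K)) hfrontier
    (hF.comp (toMixed K).continuous)
  rw [ZLattice.covolume_comap _ _ _ (volumePreserving_toMixed K),
    covolume_idealLattice_eq_mul_absNorm, Function.comp_def, hintegral, euclidean.finrank] at hlim
  refine hlim.congr' ?_
  filter_upwards [eventually_ne_atTop 0] with n hn
  have hn' : (n : ℝ) ≠ 0 := Nat.cast_ne_zero.mpr hn
  congr 1
  refine ((toMixed K).toEquiv.subtypeEquiv fun x ↦ ?_).tsum_eq fun x ↦ F x.1
  rw [ZLattice.coe_comap, Set.mem_inter_iff, Set.mem_inter_iff, Set.mem_inv_smul_set_iff₀ hn',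
    Set.mem_inv_smul_set_iff₀ hn']
  simp

end LatticeSums

/-! ### Counting ideals -/

section Counting

open scoped nonZeroDivisors

variable {K : Type*} [Field K] [NumberField K]

lemma absNorm_pos {I : Ideal (𝓞 K)} (hI : I ≠ ⊥) : 0 < Ideal.absNorm I :=
  Nat.pos_of_ne_zero (Ideal.absNorm_eq_zero_iff.not.mpr hI)

variable (K) in
/-- The finite set of nonzero ideals of norm at most `N`. -/
noncomputable def idealsLE (N : ℕ) : Finset (Ideal (𝓞 K)) :=
  ((Ideal.finite_setOfPred_absNorm_le (S := 𝓞 K) N).subset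
    (t := {I : Ideal (𝓞 K) | I ≠ ⊥ ∧ Ideal.absNorm I ≤ N}) fun _ h ↦ h.2).toFinset

@[simp]
lemma mem_idealsLE {N : ℕ} {I : Ideal (𝓞 K)} :
    I ∈ idealsLE K N ↔ I ≠ ⊥ ∧ Ideal.absNorm I ≤ N := by
  simp [idealsLE]

lemma idealsLE_mono : Monotone (idealsLE K) := fun _ _ h _ hI ↦
  mem_idealsLE.mpr ⟨(mem_idealsLE.mp hI).1, (mem_idealsLE.mp hI).2.trans h⟩

lemma idealsLE_zero : idealsLE K 0 = ∅ :=
  Finset.eq_empty_of_forall_notMem fun _ hI ↦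
    (absNorm_pos (mem_idealsLE.mp hI).1).not_ge (mem_idealsLE.mp hI).2

lemma card_idealsLE (N : ℕ) : (idealsLE K N).card =
    Nat.card {I : (Ideal (𝓞 K))⁰ // Ideal.absNorm (I : Ideal (𝓞 K)) ≤ (N : ℝ)} := by
  rw [← Nat.card_eq_finsetCard]
  exact Nat.card_congr
    { toFun I := ⟨⟨I.1, mem_nonZeroDivisors_of_ne_zero (mem_idealsLE.mp I.2).1⟩,
        Nat.cast_le.mpr (mem_idealsLE.mp I.2).2⟩
      invFun I := ⟨I.1.1, mem_idealsLE.mpr ⟨nonZeroDivisors.coe_ne_zero I.1, Nat.cast_le.mp I.2⟩⟩ }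

variable (K) in
lemma tendsto_card_idealsLE_div :
    Tendsto (fun N : ℕ ↦ ((idealsLE K N).card : ℝ) / N) atTop (𝓝 (dedekindZeta_residue K)) :=
  ((NumberField.Ideal.tendsto_norm_le_div_atTop₀ K).comp tendsto_natCast_atTop_atTop).congr
    fun n ↦ by rw [Function.comp_apply, card_idealsLE]

variable (K) in
lemma exists_card_idealsLE_le : ∃ C : ℝ, 0 < C ∧ ∀ N : ℕ, ((idealsLE K N).card : ℝ) ≤ C * N := by
  obtain ⟨C, hC⟩ := (tendsto_card_idealsLE_div K).bddAbove_range
  refine ⟨max C 1, by positivity, fun N ↦ ?_⟩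
  rcases N.eq_zero_or_pos with rfl | hN
  · simp [idealsLE_zero]
  · rw [← div_le_iff₀ (Nat.cast_pos.mpr hN)]
    exact (hC ⟨N, rfl⟩).trans (le_max_left C 1)

open scoped Classical in
lemma filter_dvd_idealsLE {J : Ideal (𝓞 K)} (hJ : J ≠ ⊥) (N : ℕ) :
    (idealsLE K N).filter (J ∣ ·) = (idealsLE K (N / Ideal.absNorm J)).image (J * ·) := by
  ext I
  simp only [Finset.mem_filter, Finset.mem_image, mem_idealsLE,
    Nat.le_div_iff_mul_le (absNorm_pos hJ)]
  constructor
  · rintro ⟨⟨hI, hN⟩, I', rfl⟩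
    exact ⟨I', ⟨right_ne_zero_of_mul hI, by rwa [mul_comm, ← map_mul]⟩, rfl⟩
  · rintro ⟨I', ⟨hI', hN⟩, rfl⟩
    exact ⟨⟨mul_ne_zero hJ hI', by rwa [map_mul, mul_comm]⟩, dvd_mul_right J I'⟩

open scoped Classical in
lemma card_filter_dvd_idealsLE {J : Ideal (𝓞 K)} (hJ : J ≠ ⊥) (N : ℕ) :
    ((idealsLE K N).filter (J ∣ ·)).card = (idealsLE K (N / Ideal.absNorm J)).card := by
  rw [filter_dvd_idealsLE hJ, Finset.card_image_of_injective _ (mul_right_injective₀ hJ)]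

open scoped Classical in
lemma card_filter_dvd_idealsLE_le {C : ℝ} (hC_pos : 0 < C)
    (hC : ∀ N : ℕ, ((idealsLE K N).card : ℝ) ≤ C * N) {J : Ideal (𝓞 K)} (hJ : J ≠ ⊥) (N : ℕ) :
    (((idealsLE K N).filter (J ∣ ·)).card : ℝ) ≤ C * N * (1 / Ideal.absNorm J) := by
  rw [card_filter_dvd_idealsLE hJ, mul_assoc, mul_one_div]
  exact (hC _).trans (mul_le_mul_of_nonneg_left Nat.cast_div_le hC_pos.le)

end Counting

/-! ### Lattice points and principal ideals -/

section PrincipalIdeals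

open mixedEmbedding fundamentalCone
open scoped nonZeroDivisors Pointwise

variable {K : Type*} [Field K] [NumberField K]

open scoped Classical in
/-- The finite set of nonzero principal ideals of norm at most `N` that are divisible by `J`. -/
noncomputable def principalMultiplesLE (J : Ideal (𝓞 K)) (N : ℕ) : Finset (Ideal (𝓞 K)) :=
  (idealsLE K N).filter fun I ↦ J ∣ I ∧ I.IsPrincipal

lemma mem_principalMultiplesLE {J I : Ideal (𝓞 K)} {N : ℕ} :
    I ∈ principalMultiplesLE J N ↔
      (I ≠ ⊥ ∧ Ideal.absNorm I ≤ N) ∧ J ∣ I ∧ I.IsPrincipal := by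
  simp only [principalMultiplesLE, Finset.mem_filter, mem_idealsLE]

/-- The point `a` of the integer set of the fundamental cone generates an ideal lying in
`principalMultiplesLE J N`. -/
def GeneratesMultipleLE (J : Ideal (𝓞 K)) (N : ℕ) (a : integerSet K) : Prop :=
  J ∣ Ideal.span {(preimageOfMemIntegerSet a : 𝓞 K)} ∧
    Ideal.absNorm (Ideal.span {(preimageOfMemIntegerSet a : 𝓞 K)}) ≤ N

lemma norm_coe_integerSet (a : integerSet K) :
    mixedEmbedding.norm (a : mixedSpace K) =
      Ideal.absNorm (Ideal.span {(preimageOfMemIntegerSet a : 𝓞 K)}) := by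
  rw [← intNorm_coe, Ideal.absNorm_span_singleton, intNorm]

lemma mem_idealSet_iff_exists_integerSet {J : (Ideal (𝓞 K))⁰} {x : mixedSpace K} :
    x ∈ idealSet K J ↔ ∃ a : integerSet K,
      (J : Ideal (𝓞 K)) ∣ Ideal.span {(preimageOfMemIntegerSet a : 𝓞 K)} ∧ a = x := by
  simp_rw [Ideal.dvd_span_singleton]
  constructor
  · exact fun hx ↦ ⟨idealSetMap K J ⟨x, hx⟩, preimage_of_IdealSetMap K J ⟨x, hx⟩, rfl⟩
  · rintro ⟨a, haJ, rfl⟩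
    exact mem_idealSet.mpr ⟨a.2.1, _, haJ, mixedEmbedding_preimageOfMemIntegerSet a⟩

lemma mem_normLeOne_inter_smul_iff {n : ℕ} (hn : n ≠ 0) (J : (Ideal (𝓞 K))⁰) (x : mixedSpace K) :
    x ∈ normLeOne K ∩ (n : ℝ)⁻¹ •
      (idealLattice K (FractionalIdeal.mk0 K J) : Set (mixedSpace K)) ↔
      ∃ a : integerSet K, GeneratesMultipleLE (J : Ideal (𝓞 K)) (n ^ finrank ℚ K) a ∧
        (a : mixedSpace K) = (n : ℝ) • x := by
  have hn' : (n : ℝ) ≠ 0 := Nat.cast_ne_zero.mpr hn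
  have hpow : (0 : ℝ) < (n : ℝ) ^ finrank ℚ K := by positivity
  have hscale : x ∈ normLeOne K ∩ (n : ℝ)⁻¹ •
      (idealLattice K (FractionalIdeal.mk0 K J) : Set (mixedSpace K)) ↔
      (n : ℝ) • x ∈ idealSet K J ∧
        mixedEmbedding.norm ((n : ℝ) • x) ≤ (n : ℝ) ^ finrank ℚ K := by
    rw [Set.mem_inter_iff, Set.mem_inv_smul_set_iff₀ hn', mem_normLeOne, idealSet,
      Set.mem_inter_iff, fundamentalCone.smul_mem_iff_mem hn', mixedEmbedding.norm_smul,
      Nat.abs_cast, mul_le_iff_le_one_right hpow]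
    tauto
  rw [hscale, mem_idealSet_iff_exists_integerSet, ← exists_and_right]
  refine exists_congr fun a ↦ ?_
  rw [GeneratesMultipleLE, and_right_comm, and_congr_left_iff, and_congr_right_iff]
  rintro hax -
  rw [← hax, norm_coe_integerSet]
  norm_cast

/-- Scaling by `n` matches the points of `n⁻¹ J` of norm at most one in the fundamental cone with
the points of the integer set that generate a multiple of `J` of norm at most `n ^ [K : ℚ]`. -/
noncomputable def generatesMultipleLEEquiv {n : ℕ} (hn : n ≠ 0) (J : (Ideal (𝓞 K))⁰) :
    {a : integerSet K // GeneratesMultipleLE (J : Ideal (𝓞 K)) (n ^ finrank ℚ K) a} ≃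
      ↑(normLeOne K ∩ (n : ℝ)⁻¹ •
        (idealLattice K (FractionalIdeal.mk0 K J) : Set (mixedSpace K))) :=
  have hn' : (n : ℝ) ≠ 0 := Nat.cast_ne_zero.mpr hn
  Equiv.ofBijective
    (fun a ↦ ⟨(n : ℝ)⁻¹ • (a.1 : mixedSpace K), (mem_normLeOne_inter_smul_iff hn J _).mpr
      ⟨a.1, a.2, (smul_inv_smul₀ hn' _).symm⟩⟩)
    ⟨fun a b hab ↦ Subtype.ext <| Subtype.ext <|
        smul_right_injective _ (inv_ne_zero hn') (congrArg Subtype.val hab),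
      fun x ↦ by
        obtain ⟨a, ha, hax⟩ := (mem_normLeOne_inter_smul_iff hn J x.1).mp x.2
        exact ⟨⟨a, ha⟩, Subtype.ext (by simp only [hax, inv_smul_smul₀ hn'])⟩⟩

/-- A point of the integer set is determined by the ideal it generates up to a root of unity. -/
noncomputable def principalMultiplesLEProdTorsionEquiv (J : Ideal (𝓞 K)) (N : ℕ) :
    {a : integerSet K // GeneratesMultipleLE J N a} ≃
      principalMultiplesLE J N × Units.torsion K :=
  ((integerSetEquiv K).subtypeEquiv (q := fun p ↦ J ∣ p.1.1.1 ∧ Ideal.absNorm p.1.1.1 ≤ N)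
    fun _ ↦ Iff.rfl).trans <|
  Equiv.prodSubtypeFstEquivSubtypeProd.trans <| Equiv.prodCongrLeft fun _ ↦
    { toFun := fun I : {I : {I : (Ideal (𝓞 K))⁰ // I.1.IsPrincipal} //
          J ∣ I.1.1 ∧ Ideal.absNorm I.1.1 ≤ N} ↦ ⟨I.1.1.1, mem_principalMultiplesLE.mpr
            ⟨⟨nonZeroDivisors.coe_ne_zero I.1.1, I.2.2⟩, I.2.1, I.1.2⟩⟩
      invFun := fun ⟨I, hI⟩ ↦
        have hI := mem_principalMultiplesLE.mp hI
        ⟨⟨⟨I, mem_nonZeroDivisors_of_ne_zero hI.1.1⟩, hI.2.2⟩, hI.2.1, hI.1.2⟩ }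

lemma tsum_normLeOne_inter_smul_eq {n : ℕ} (hn : n ≠ 0) (J : (Ideal (𝓞 K))⁰)
    {F : mixedSpace K → ℝ} {G : Ideal (𝓞 K) → ℝ}
    (hFG : ∀ a : 𝓞 K, a ≠ 0 → F ((n : ℝ)⁻¹ • mixedEmbedding K (a : K)) = G (Ideal.span {a})) :
    ∑' x : ↑(normLeOne K ∩ (n : ℝ)⁻¹ •
        (idealLattice K (FractionalIdeal.mk0 K J) : Set (mixedSpace K))), F x =
      Units.torsionOrder K *
        ∑ I ∈ principalMultiplesLE (J : Ideal (𝓞 K)) (n ^ finrank ℚ K), G I := by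
  have : Fintype (Units.torsion K) := Fintype.ofFinite _
  have hF (a : {a : integerSet K // GeneratesMultipleLE (J : Ideal (𝓞 K)) (n ^ finrank ℚ K) a}) :
      F (generatesMultipleLEEquiv hn J a) =
        G (principalMultiplesLEProdTorsionEquiv _ _ a).1 := by
    change F ((n : ℝ)⁻¹ • (a.1 : mixedSpace K)) = G (Ideal.span {_})
    rw [← hFG _ (nonZeroDivisors.coe_ne_zero _), mixedEmbedding_preimageOfMemIntegerSet]
  rw [← (generatesMultipleLEEquiv hn J).tsum_eq, tsum_congr hF,
    (principalMultiplesLEProdTorsionEquiv (J : Ideal (𝓞 K)) (n ^ finrank ℚ K)).tsum_eq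
      fun p ↦ G p.1, tsum_fintype,
    Fintype.sum_prod_type_right]
  simp only [Finset.sum_const, Finset.card_univ, nsmul_eq_mul]
  rw [Finset.sum_coe_sort (principalMultiplesLE (J : Ideal (𝓞 K)) _) G, Units.torsionOrder,
    Nat.card_eq_fintype_card]

end PrincipalIdeals

section Limits

lemma tendsto_zero_of_forall_exists_norm_sub_le {ι E : Type*} [SeminormedAddCommGroup E]
    {l : Filter ι} {u : ι → E} (h : ∀ ε > 0, ∃ v : ι → E, Tendsto v l (𝓝 0) ∧
      ∀ᶠ i in l, ‖u i - v i‖ ≤ ε) : Tendsto u l (𝓝 0) := by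
  refine NormedAddGroup.tendsto_nhds_zero.mpr fun ε hε ↦ ?_
  obtain ⟨v, hv, huv⟩ := h (ε / 2) (half_pos hε)
  filter_upwards [huv, NormedAddGroup.tendsto_nhds_zero.mp hv (ε / 2) (half_pos hε)]
    with i hi hvi
  linarith [norm_le_insert' (u i) (v i)]

lemma tendsto_natFloor_rpow_inv_atTop {d : ℕ} (hd : d ≠ 0) :
    Tendsto (fun N : ℕ ↦ ⌊(N : ℝ) ^ (d : ℝ)⁻¹⌋₊) atTop atTop :=
  tendsto_nat_floor_atTop.comp
    ((tendsto_rpow_atTop (by positivity)).comp tendsto_natCast_atTop_atTop)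

lemma natFloor_rpow_inv_pow_le {d : ℕ} (hd : d ≠ 0) (N : ℕ) :
    ⌊(N : ℝ) ^ (d : ℝ)⁻¹⌋₊ ^ d ≤ N := by
  have h : (⌊(N : ℝ) ^ (d : ℝ)⁻¹⌋₊ : ℝ) ^ d ≤ ((N : ℝ) ^ (d : ℝ)⁻¹) ^ d := by
    gcongr
    exact Nat.floor_le (by positivity)
  rw [Real.rpow_inv_natCast_pow N.cast_nonneg hd] at h
  exact_mod_cast h

lemma tendsto_natFloor_rpow_inv_pow_div {d : ℕ} (hd : d ≠ 0) :
    Tendsto (fun N : ℕ ↦ (⌊(N : ℝ) ^ (d : ℝ)⁻¹⌋₊ : ℝ) ^ d / N) atTop (𝓝 1) := by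
  have h := ((tendsto_nat_floor_div_atTop (R := ℝ)).comp
    ((tendsto_rpow_atTop (y := (d : ℝ)⁻¹) (by positivity)).comp
      tendsto_natCast_atTop_atTop)).pow d
  rw [one_pow] at h
  refine h.congr fun N ↦ ?_
  simp only [Function.comp_apply]
  rw [div_pow, Real.rpow_inv_natCast_pow N.cast_nonneg hd]

-- Compare `a N` with `a M`, where `M` is the largest `d`-th power at most `N`, so that `M ∼ N`.
lemma tendsto_norm_div_of_tendsto_pow {E : Type*} [SeminormedAddCommGroup E] {a : ℕ → E}
    {b : ℕ → ℝ} {ρ : ℝ} {d : ℕ} (hd : d ≠ 0) (hb : Tendsto (fun N : ℕ ↦ b N / N) atTop (𝓝 ρ))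
    (hab : ∀ M N, M ≤ N → ‖a N - a M‖ ≤ b N - b M)
    (ha : Tendsto (fun n : ℕ ↦ ‖a (n ^ d)‖ / (n : ℝ) ^ d) atTop (𝓝 0)) :
    Tendsto (fun N : ℕ ↦ ‖a N‖ / N) atTop (𝓝 0) := by
  set m : ℕ → ℕ := fun N ↦ ⌊(N : ℝ) ^ (d : ℝ)⁻¹⌋₊
  have hm : Tendsto m atTop atTop := tendsto_natFloor_rpow_inv_atTop hd
  have hratio : Tendsto (fun N ↦ (m N : ℝ) ^ d / N) atTop (𝓝 1) :=
    tendsto_natFloor_rpow_inv_pow_div hd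
  have hlim := ((ha.comp hm).mul hratio).add
    (hb.sub ((hb.comp ((tendsto_pow_atTop hd).comp hm)).mul hratio))
  rw [zero_mul, mul_one, sub_self, add_zero] at hlim
  refine squeeze_zero' (Eventually.of_forall fun N ↦ by positivity) ?_ hlim
  filter_upwards [hm.eventually (eventually_gt_atTop 0)] with N hN
  have hpow : (m N : ℝ) ^ d ≠ 0 := by positivity
  simp only [Function.comp_apply, Nat.cast_pow]
  rw [div_mul_div_cancel₀ hpow, div_mul_div_cancel₀ hpow, ← sub_div, ← add_div]
  gcongr
  calc ‖a N‖ ≤ ‖a (m N ^ d)‖ + ‖a N - a (m N ^ d)‖ := norm_le_insert' _ _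
    _ ≤ ‖a (m N ^ d)‖ + (b N - b (m N ^ d)) := by
        gcongr
        exact hab _ _ (natFloor_rpow_inv_pow_le hd N)

end Limits

/-! ### Weyl sums over principal ideals -/

section Truncated

open mixedEmbedding fundamentalCone
open scoped nonZeroDivisors Pointwise

variable {K : Type*} [Field K] [NumberField K] {f : Torus K → ℝ} {δ : ℝ}

/-- The extension of `logMap` to the mixed space. -/
noncomputable def mixedLog (x : mixedSpace K) : InfinitePlace K → ℝ :=
  fun w ↦ Real.log (normAtPlace w x ^ w.mult)

lemma continuousAt_mixedLog {x : mixedSpace K} (hx : mixedEmbedding.norm x ≠ 0) :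
    ContinuousAt mixedLog x := by
  rw [mixedEmbedding.norm_apply, Finset.prod_ne_zero_iff] at hx
  exact continuousAt_pi.mpr fun w ↦
    ((mixedEmbedding.continuous_normAtPlace w).pow _).continuousAt.log (hx w (Finset.mem_univ w))

lemma coboundary_mixedLog_smul (σ : K ≃ₐ[ℚ] K) {c : ℝ} (hc : c ≠ 0) {a : K} (ha : a ≠ 0) :
    coboundary σ (mixedLog (c • mixedEmbedding K a)) = coboundary σ (logMap K a) := by
  have hlog (w : InfinitePlace K) :
      mixedLog (c • mixedEmbedding K a) w = w.mult * Real.log |c| + logMap K a w := by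
    rw [mixedLog, normAtPlace_smul, normAtPlace_apply, mul_pow, Real.log_mul (by simpa using hc)
      (by simpa using ha), Real.log_pow]
    rfl
  ext w
  rw [coboundary_apply, coboundary_apply, hlog, hlog, mult_smul, add_sub_add_left_eq_sub]

/-- The cut-off `min 1 (t / δ)`: it equals `1` for `t ≥ δ` and vanishes continuously at `0`. -/
noncomputable def cutoff (δ t : ℝ) : ℝ := min 1 (t / δ)

lemma continuous_cutoff (δ : ℝ) : Continuous (cutoff δ) := by
  unfold cutoff
  fun_prop

lemma cutoff_zero (δ : ℝ) : cutoff δ 0 = 0 := by simp [cutoff]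

lemma cutoff_nonneg (hδ : 0 < δ) {t : ℝ} (ht : 0 ≤ t) : 0 ≤ cutoff δ t :=
  le_min zero_le_one (by positivity)

lemma cutoff_le_one (δ t : ℝ) : cutoff δ t ≤ 1 := min_le_left 1 _

lemma cutoff_eq_one (hδ : 0 < δ) {t : ℝ} (ht : δ ≤ t) : cutoff δ t = 1 :=
  min_eq_left ((one_le_div hδ).mpr ht)

/-- The pull-back to the mixed space of a function on the torus, cut off near the points of norm
zero, where `mixedLog` is not continuous. -/
noncomputable def mixedPullback (σ : K ≃ₐ[ℚ] K) (f : Torus K → ℝ) (δ : ℝ) (x : mixedSpace K) : ℝ :=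
  f (QuotientAddGroup.mk (coboundary σ (mixedLog x))) * cutoff δ (mixedEmbedding.norm x)

lemma continuous_mixedPullback (σ : K ≃ₐ[ℚ] K) (hf : Continuous f) (hf_le : ∀ t, |f t| ≤ 1)
    (hδ : 0 < δ) : Continuous (mixedPullback σ f δ) := by
  have hcut : Continuous fun x : mixedSpace K ↦ cutoff δ (mixedEmbedding.norm x) :=
    (continuous_cutoff δ).comp (mixedEmbedding.continuous_norm K)
  refine continuous_iff_continuousAt.mpr fun x ↦ ?_
  by_cases hx : mixedEmbedding.norm x = 0
  · rw [ContinuousAt, mixedPullback, hx, cutoff_zero, mul_zero]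
    refine squeeze_zero_norm (fun y ↦ ?_)
      (by simpa only [hx, cutoff_zero] using hcut.tendsto x)
    have hy := cutoff_nonneg hδ (mixedEmbedding.norm_nonneg y)
    rw [mixedPullback, norm_mul, Real.norm_of_nonneg hy]
    exact mul_le_of_le_one_left hy (hf_le _)
  · exact (hf.continuousAt.comp (continuous_quot_mk.continuousAt.comp
      ((continuous_coboundary σ).continuousAt.comp (continuousAt_mixedLog hx)))).mul
        hcut.continuousAt

lemma mixedPullback_inv_smul (σ : K ≃ₐ[ℚ] K) (f : Torus K → ℝ) (δ : ℝ) {n : ℕ} (hn : n ≠ 0)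
    {a : 𝓞 K} (ha : a ≠ 0) :
    mixedPullback σ f δ ((n : ℝ)⁻¹ • mixedEmbedding K (a : K)) =
      f (logPiIdeal σ (Ideal.span {a})) *
        cutoff δ ((Ideal.absNorm (Ideal.span {a}) : ℝ) / (n : ℝ) ^ finrank ℚ K) := by
  have hnorm : mixedEmbedding.norm ((n : ℝ)⁻¹ • mixedEmbedding K (a : K)) =
      (Ideal.absNorm (Ideal.span {a}) : ℝ) / (n : ℝ) ^ finrank ℚ K := by
    rw [mixedEmbedding.norm_smul, mixedEmbedding.norm_eq_norm, abs_inv, Nat.abs_cast, inv_pow,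
      inv_mul_eq_div, Ideal.absNorm_span_singleton, ← Algebra.coe_norm_int, Nat.cast_natAbs]
    norm_cast
  rw [mixedPullback, coboundary_mixedLog_smul σ (by positivity) (by simpa using ha), hnorm,
    logPiIdeal_span_singleton σ ha, logPi]

open Classical in
lemma exists_tendsto_sum_mul_cutoff_div (σ : K ≃ₐ[ℚ] K) (hf : Continuous f)
    (hf_le : ∀ t, |f t| ≤ 1) (hδ : 0 < δ) :
    ∃ c : ℝ, ∀ J : Ideal (𝓞 K), J ≠ ⊥ →
      Tendsto (fun n : ℕ ↦ (∑ I ∈ principalMultiplesLE J (n ^ finrank ℚ K),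
          f (logPiIdeal σ I) * cutoff δ (Ideal.absNorm I / (n : ℝ) ^ finrank ℚ K)) /
          (n : ℝ) ^ finrank ℚ K)
        atTop (𝓝 (c / Ideal.absNorm J)) := by
  refine ⟨(∫ x in normLeOne K, mixedPullback σ f δ x) /
    (ZLattice.covolume (idealLattice K (FractionalIdeal.mk0 K 1))) / Units.torsionOrder K,
    fun J hJ ↦ ?_⟩
  have htors : (Units.torsionOrder K : ℝ) ≠ 0 := Nat.cast_ne_zero.mpr (NeZero.ne _)
  have h := (tendsto_tsum_idealLattice_div_pow ⟨J, mem_nonZeroDivisors_of_ne_zero hJ⟩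
    (continuous_mixedPullback σ hf hf_le hδ)).div_const (Units.torsionOrder K : ℝ)
  rw [← div_div, div_right_comm] at h
  refine h.congr' ?_
  filter_upwards [eventually_ne_atTop 0] with n hn
  rw [tsum_normLeOne_inter_smul_eq hn ⟨J, mem_nonZeroDivisors_of_ne_zero hJ⟩
    (G := fun I ↦ f (logPiIdeal σ I) * cutoff δ (Ideal.absNorm I / (n : ℝ) ^ finrank ℚ K))
    fun a ha ↦ mixedPullback_inv_smul σ f δ hn ha, div_right_comm, mul_div_cancel_left₀ _ htors]

end Truncated

section Character

open scoped nonZeroDivisors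

variable {K : Type*} [Field K] [NumberField K] {χ : AddChar (Torus K) Circle} {δ : ℝ}

/-- The character sum over the principal multiples of `J` of norm at most `n ^ [K : ℚ]`, with the
ideals of norm less than `δ n ^ [K : ℚ]` damped by `cutoff δ`. -/
noncomputable def dampedSum (σ : K ≃ₐ[ℚ] K) (χ : AddChar (Torus K) Circle) (δ : ℝ)
    (J : Ideal (𝓞 K)) (n : ℕ) : ℂ :=
  ∑ I ∈ principalMultiplesLE J (n ^ finrank ℚ K),
    (χ (logPiIdeal σ I) : ℂ) * cutoff δ (Ideal.absNorm I / (n : ℝ) ^ finrank ℚ K)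

lemma exists_tendsto_dampedSum_div (σ : K ≃ₐ[ℚ] K) (hχ : Continuous χ) (hδ : 0 < δ) :
    ∃ c : ℂ, ∀ J : Ideal (𝓞 K), J ≠ ⊥ →
      Tendsto (fun n : ℕ ↦ dampedSum σ χ δ J n / (n : ℂ) ^ finrank ℚ K) atTop
        (𝓝 (c / Ideal.absNorm J)) := by
  have hχ' : Continuous fun t ↦ (χ t : ℂ) := continuous_subtype_val.comp hχ
  obtain ⟨x, hx⟩ := exists_tendsto_sum_mul_cutoff_div σ (Complex.continuous_re.comp hχ')
    (fun t ↦ (Complex.abs_re_le_norm _).trans_eq (Circle.norm_coe (χ t))) hδ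
  obtain ⟨y, hy⟩ := exists_tendsto_sum_mul_cutoff_div σ (Complex.continuous_im.comp hχ')
    (fun t ↦ (Complex.abs_im_le_norm _).trans_eq (Circle.norm_coe (χ t))) hδ
  refine ⟨x + y * Complex.I, fun J hJ ↦ ?_⟩
  have h := ((Complex.continuous_ofReal.tendsto _).comp (hx J hJ)).add
    (((Complex.continuous_ofReal.tendsto _).comp (hy J hJ)).mul_const Complex.I)
  have hlim : (x + y * Complex.I) / Ideal.absNorm J =
      ((x / Ideal.absNorm J : ℝ) : ℂ) + ((y / Ideal.absNorm J : ℝ) : ℂ) * Complex.I := by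
    push_cast
    ring
  rw [hlim]
  refine h.congr fun n ↦ ?_
  simp only [Function.comp_apply, dampedSum]
  push_cast
  rw [div_mul_eq_mul_div, ← add_div, Finset.sum_mul, ← Finset.sum_add_distrib]
  congr 1
  refine Finset.sum_congr rfl fun I _ ↦ ?_
  conv_rhs => rw [← Complex.re_add_im (χ (logPiIdeal σ I) : ℂ)]
  ring

lemma isPrincipal_span_singleton_mul_iff {R : Type*} [CommRing R] [IsDedekindDomain R] {a : R}
    (ha : a ≠ 0) {I : Ideal R} : (Ideal.span {a} * I).IsPrincipal ↔ I.IsPrincipal := by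
  constructor
  · rintro ⟨b, hb⟩
    obtain ⟨c, rfl⟩ : a ∣ b := by
      rw [← Ideal.span_singleton_le_span_singleton, ← Ideal.submodule_span_eq, ← hb]
      exact Ideal.mul_le_left
    rw [Ideal.submodule_span_eq, ← Ideal.span_singleton_mul_span_singleton] at hb
    exact ⟨c, mul_left_cancel₀ (by simpa using ha : Ideal.span {a} ≠ 0) hb⟩
  · rintro ⟨c, rfl⟩
    exact ⟨a * c, Ideal.span_singleton_mul_span_singleton a c⟩

open Classical in
lemma principalMultiplesLE_span_singleton_mul {γ : 𝓞 K} (hγ : γ ≠ 0) (J : Ideal (𝓞 K)) (N : ℕ) :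
    principalMultiplesLE (Ideal.span {γ} * J) (Ideal.absNorm (Ideal.span {γ}) * N) =
      (principalMultiplesLE J N).image (Ideal.span {γ} * ·) := by
  have hspan : Ideal.span {γ} ≠ (0 : Ideal (𝓞 K)) := by simpa using hγ
  ext I
  simp only [Finset.mem_image, mem_principalMultiplesLE]
  constructor
  · rintro ⟨⟨hI, hN⟩, ⟨I', rfl⟩, hprin⟩
    rw [mul_assoc] at hI hN hprin ⊢
    rw [map_mul] at hN
    exact ⟨J * I', ⟨⟨right_ne_zero_of_mul hI, Nat.le_of_mul_le_mul_left hN (absNorm_pos hspan)⟩,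
      dvd_mul_right J I', (isPrincipal_span_singleton_mul_iff hγ).mp hprin⟩, rfl⟩
  · rintro ⟨I', ⟨⟨hI, hN⟩, hdvd, hprin⟩, rfl⟩
    refine ⟨⟨mul_ne_zero hspan hI, ?_⟩, mul_dvd_mul_left _ hdvd,
      (isPrincipal_span_singleton_mul_iff hγ).mpr hprin⟩
    rw [map_mul]
    exact Nat.mul_le_mul_left _ hN

lemma dampedSum_span_singleton_mul (σ : K ≃ₐ[ℚ] K) (χ : AddChar (Torus K) Circle) (δ : ℝ)
    {γ : 𝓞 K} (hγ : γ ≠ 0) {g : ℕ} (hg : Ideal.absNorm (Ideal.span {γ}) = g ^ finrank ℚ K)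
    (J : Ideal (𝓞 K)) (n : ℕ) :
    dampedSum σ χ δ (Ideal.span {γ} * J) (g * n) =
      χ (logPi σ (γ : K)) * dampedSum σ χ δ J n := by
  classical
  have hspan : Ideal.span {γ} ≠ (0 : Ideal (𝓞 K)) := by simpa using hγ
  have hg_ne : (g : ℝ) ^ finrank ℚ K ≠ 0 := by
    exact_mod_cast hg ▸ (absNorm_pos hspan).ne'
  rw [dampedSum, dampedSum, mul_pow, ← hg, principalMultiplesLE_span_singleton_mul hγ,
    Finset.sum_image (mul_right_injective₀ hspan).injOn, Finset.mul_sum]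
  refine Finset.sum_congr rfl fun I hI ↦ ?_
  obtain ⟨⟨hI_ne, -⟩, -, hI_prin⟩ := mem_principalMultiplesLE.mp hI
  rw [logPiIdeal_mul σ hspan hI_ne ⟨γ, rfl⟩ hI_prin, logPiIdeal_span_singleton σ hγ,
    AddChar.map_add_eq_mul, Circle.coe_mul, mul_assoc, map_mul, hg]
  push_cast
  rw [mul_pow, mul_div_mul_left _ _ hg_ne]

end Character

section DampedSums

variable {K : Type*} [Field K] [NumberField K] [IsGalois ℚ K] {σ : K ≃ₐ[ℚ] K}
  {χ : AddChar (Torus K) Circle}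

lemma exists_integer_logPi_ne_one_of_absNorm_eq_pow
    (hσ : ∀ τ : K ≃ₐ[ℚ] K, τ ∈ Subgroup.zpowers σ) (hχ : Continuous χ) (hχ_ne : χ ≠ 1) {d : ℕ}
    (hd : d ≠ 0) :
    ∃ (γ : 𝓞 K) (g : ℕ), γ ≠ 0 ∧ Ideal.absNorm (Ideal.span {γ}) = g ^ d ∧
      χ (logPi σ (γ : K)) ≠ 1 := by
  obtain ⟨γ, hγ, hχγ⟩ := exists_integer_logPi_ne_one hσ (χ := χ ^ d)
    (by rw [AddChar.coe_pow]; exact hχ.pow d)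
    (pow_ne_one_of_nsmul_surjective hχ_ne (torus_nsmul_surjective hd))
  refine ⟨γ ^ d, Ideal.absNorm (Ideal.span {γ}), pow_ne_zero d hγ, ?_, ?_⟩
  · rw [← Ideal.span_singleton_pow, map_pow]
  · change χ (logPi σ ((γ : K) ^ d)) ≠ 1
    rwa [logPi_pow σ (by simpa using hγ), AddChar.map_nsmul_eq_pow, ← AddChar.pow_apply]

-- Multiplication by `γ` gives `c / N γ = χ (log π γ) * c / N γ` for the limit constant `c`.
lemma tendsto_dampedSum_div_zero (hσ : ∀ τ : K ≃ₐ[ℚ] K, τ ∈ Subgroup.zpowers σ)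
    (hχ : Continuous χ) (hχ_ne : χ ≠ 1) {δ : ℝ} (hδ : 0 < δ) {J : Ideal (𝓞 K)} (hJ : J ≠ ⊥) :
    Tendsto (fun n : ℕ ↦ dampedSum σ χ δ J n / (n : ℂ) ^ finrank ℚ K) atTop (𝓝 0) := by
  set d := finrank ℚ K with hd
  obtain ⟨c, hc⟩ := exists_tendsto_dampedSum_div σ hχ hδ
  obtain ⟨γ, g, hγ, hg, hχγ⟩ :=
    exists_integer_logPi_ne_one_of_absNorm_eq_pow hσ hχ hχ_ne (finrank_pos (R := ℚ) (M := K)).ne'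
  have hspan : Ideal.span {γ} ≠ (⊥ : Ideal (𝓞 K)) := by simpa using hγ
  have hgd : g ^ d ≠ 0 := hg ▸ (absNorm_pos hspan).ne'
  have hg_pos : 0 < g := Nat.pos_of_ne_zero fun h ↦ hgd (by rw [h, hd, zero_pow finrank_pos.ne'])
  have hgd' : (g : ℂ) ^ d ≠ 0 := by exact_mod_cast hgd
  suffices c = 0 by simpa only [this, zero_div] using hc J hJ
  have hleft : Tendsto (fun n : ℕ ↦ dampedSum σ χ δ (Ideal.span {γ} * ⊤) (g * n) /
      ((g * n : ℕ) : ℂ) ^ d) atTop (𝓝 (c / (g : ℂ) ^ d)) := by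
    have h := (hc (Ideal.span {γ}) hspan).comp (tendsto_id.const_mul_atTop' hg_pos)
    rw [hg, Nat.cast_pow] at h
    rwa [Ideal.mul_top]
  have hright := ((hc ⊤ top_ne_bot).const_mul (χ (logPi σ (γ : K)) : ℂ)).div_const ((g : ℂ) ^ d)
  have heq := tendsto_nhds_unique (hleft.congr fun n ↦ by
    rw [dampedSum_span_singleton_mul σ χ δ hγ hg, Nat.cast_mul, mul_pow, ← hd, ← div_div,
      div_right_comm, mul_div_assoc]) hright
  rw [Ideal.absNorm_top, Nat.cast_one, div_one, div_left_inj' hgd'] at heq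
  by_contra hc_ne
  exact hχγ (Circle.ext (mul_right_cancel₀ hc_ne (by rw [← heq, Circle.coe_one, one_mul])))

end DampedSums

section UndampedSums

variable {K : Type*} [Field K] [NumberField K]

lemma norm_sum_sub_dampedSum_le (σ : K ≃ₐ[ℚ] K) (χ : AddChar (Torus K) Circle) {C : ℝ}
    (hC_pos : 0 < C) (hC : ∀ N : ℕ, ((idealsLE K N).card : ℝ) ≤ C * N) {δ : ℝ} (hδ : 0 < δ)
    (J : Ideal (𝓞 K)) {n : ℕ} (hn : n ≠ 0) :
    ‖∑ I ∈ principalMultiplesLE J (n ^ finrank ℚ K), (χ (logPiIdeal σ I) : ℂ) -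
      dampedSum σ χ δ J n‖ ≤ C * (δ * (n : ℝ) ^ finrank ℚ K) := by
  classical
  have hpow : (0 : ℝ) < (n : ℝ) ^ finrank ℚ K := by positivity
  set M := ⌊δ * (n : ℝ) ^ finrank ℚ K⌋₊
  have hterm (I : Ideal (𝓞 K)) (hI : I ≠ ⊥) :
      ‖(χ (logPiIdeal σ I) : ℂ) - χ (logPiIdeal σ I) *
        cutoff δ (Ideal.absNorm I / (n : ℝ) ^ finrank ℚ K)‖ ≤
          if I ∈ idealsLE K M then 1 else 0 := by
    set q : ℝ := Ideal.absNorm I / (n : ℝ) ^ finrank ℚ K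
    rw [← mul_one_sub, norm_mul, Circle.norm_coe, one_mul, ← Complex.ofReal_one,
      ← Complex.ofReal_sub, Complex.norm_real,
      Real.norm_of_nonneg (by linarith [cutoff_le_one δ q])]
    split_ifs with hIM
    · linarith [cutoff_nonneg hδ (t := q) (by positivity)]
    · have hq : δ ≤ q := by
        rw [mem_idealsLE, not_and, not_le] at hIM
        exact (le_div_iff₀ hpow).mpr (Nat.lt_of_floor_lt (hIM hI)).le
      rw [cutoff_eq_one hδ hq, sub_self]
  rw [dampedSum, ← Finset.sum_sub_distrib]
  calc _ ≤ ∑ I ∈ principalMultiplesLE J (n ^ finrank ℚ K),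
        if I ∈ idealsLE K M then (1 : ℝ) else 0 :=
        norm_sum_le_of_le _ fun I hI ↦ hterm I (mem_principalMultiplesLE.mp hI).1.1
    _ ≤ (idealsLE K M).card := by
        rw [Finset.sum_ite_mem, Finset.sum_const, nsmul_eq_mul, mul_one]
        exact_mod_cast Finset.card_le_card Finset.inter_subset_right
    _ ≤ C * M := hC M
    _ ≤ C * (δ * (n : ℝ) ^ finrank ℚ K) := by
        gcongr
        exact Nat.floor_le (by positivity)

lemma norm_sum_principalMultiplesLE_sub_le (σ : K ≃ₐ[ℚ] K) (χ : AddChar (Torus K) Circle)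
    (J : Ideal (𝓞 K)) {M N : ℕ} (hMN : M ≤ N) :
    ‖∑ I ∈ principalMultiplesLE J N, (χ (logPiIdeal σ I) : ℂ) -
      ∑ I ∈ principalMultiplesLE J M, (χ (logPiIdeal σ I) : ℂ)‖ ≤
      ((idealsLE K N).card : ℝ) - (idealsLE K M).card := by
  classical
  have hsub : principalMultiplesLE J M ⊆ principalMultiplesLE J N :=
    Finset.filter_subset_filter _ (idealsLE_mono hMN)
  have hsdiff : principalMultiplesLE J N \ principalMultiplesLE J M ⊆
      idealsLE K N \ idealsLE K M := by
    intro _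
    simp only [Finset.mem_sdiff, mem_principalMultiplesLE, mem_idealsLE]
    tauto
  rw [← Finset.sum_sdiff hsub, add_sub_cancel_right]
  calc _ ≤ ∑ _ ∈ principalMultiplesLE J N \ principalMultiplesLE J M, (1 : ℝ) :=
        norm_sum_le_of_le _ fun _ _ ↦ (Circle.norm_coe _).le
    _ ≤ ((idealsLE K N \ idealsLE K M).card : ℝ) := by
        rw [Finset.sum_const, nsmul_eq_mul, mul_one]
        exact_mod_cast Finset.card_le_card hsdiff
    _ = _ := Finset.cast_card_sdiff (idealsLE_mono hMN)

end UndampedSums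

section Cancellation

variable {K : Type*} [Field K] [NumberField K] [IsGalois ℚ K] {σ : K ≃ₐ[ℚ] K}
  {χ : AddChar (Torus K) Circle}

lemma tendsto_sum_principalMultiplesLE_pow_div
    (hσ : ∀ τ : K ≃ₐ[ℚ] K, τ ∈ Subgroup.zpowers σ) (hχ : Continuous χ) (hχ_ne : χ ≠ 1)
    {J : Ideal (𝓞 K)} (hJ : J ≠ ⊥) :
    Tendsto (fun n : ℕ ↦ (∑ I ∈ principalMultiplesLE J (n ^ finrank ℚ K),
      (χ (logPiIdeal σ I) : ℂ)) / (n : ℂ) ^ finrank ℚ K) atTop (𝓝 0) := by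
  obtain ⟨C, hC_pos, hC⟩ := exists_card_idealsLE_le K
  refine tendsto_zero_of_forall_exists_norm_sub_le fun ε hε ↦
    ⟨_, tendsto_dampedSum_div_zero hσ hχ hχ_ne (div_pos hε hC_pos) hJ, ?_⟩
  filter_upwards [eventually_ne_atTop 0] with n hn
  have hpow : (0 : ℝ) < (n : ℝ) ^ finrank ℚ K := by positivity
  rw [← sub_div, norm_div, norm_pow, Complex.norm_natCast, div_le_iff₀ hpow]
  refine (norm_sum_sub_dampedSum_le σ χ hC_pos hC (div_pos hε hC_pos) J hn).trans_eq ?_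
  rw [← mul_assoc, mul_div_cancel₀ _ hC_pos.ne']

lemma tendsto_sum_principalMultiplesLE_div
    (hσ : ∀ τ : K ≃ₐ[ℚ] K, τ ∈ Subgroup.zpowers σ) (hχ : Continuous χ) (hχ_ne : χ ≠ 1)
    {J : Ideal (𝓞 K)} (hJ : J ≠ ⊥) :
    Tendsto (fun N : ℕ ↦ (∑ I ∈ principalMultiplesLE J N, (χ (logPiIdeal σ I) : ℂ)) / N)
      atTop (𝓝 0) := by
  have hpow := (tendsto_sum_principalMultiplesLE_pow_div hσ hχ hχ_ne hJ).norm
  simp only [norm_div, norm_pow, Complex.norm_natCast, norm_zero] at hpow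
  rw [tendsto_zero_iff_norm_tendsto_zero]
  simpa only [norm_div, Complex.norm_natCast] using
    tendsto_norm_div_of_tendsto_pow finrank_pos.ne' (tendsto_card_idealsLE_div K)
      (fun _ _ ↦ norm_sum_principalMultiplesLE_sub_le σ χ J) hpow

open Classical in
lemma tendsto_sum_principalMultiplesLE_sieve_div
    (hσ : ∀ τ : K ≃ₐ[ℚ] K, τ ∈ Subgroup.zpowers σ) (hχ : Continuous χ) (hχ_ne : χ ≠ 1)
    (F : Finset (Ideal (𝓞 K))) (hF : ∀ D ∈ F, D ≠ ⊥) {J : Ideal (𝓞 K)} (hJ : J ≠ ⊥) :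
    Tendsto (fun N : ℕ ↦ (∑ I ∈ principalMultiplesLE J N with ∀ D ∈ F, ¬ D ∣ I,
      (χ (logPiIdeal σ I) : ℂ)) / N) atTop (𝓝 0) := by
  induction F using Finset.induction_on generalizing J with
  | empty => simpa using tendsto_sum_principalMultiplesLE_div hσ hχ hχ_ne hJ
  | insert D F _ ih =>
    rw [Finset.forall_mem_insert] at hF
    have hJD : J ⊓ D ≠ ⊥ := fun h ↦
      mul_ne_zero hJ hF.1 (le_bot_iff.mp (Ideal.mul_le_inf.trans_eq h))
    have h := (ih hF.2 hJ).sub (ih hF.2 hJD)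
    rw [sub_zero] at h
    refine h.congr fun N ↦ ?_
    have hnotdvd : {I ∈ principalMultiplesLE J N | ∀ D' ∈ insert D F, ¬ D' ∣ I} =
        {I ∈ {I ∈ principalMultiplesLE J N | ∀ D' ∈ F, ¬ D' ∣ I} | ¬ D ∣ I} := by
      simp only [Finset.filter_filter, Finset.forall_mem_insert, and_comm]
    have hdvd : {I ∈ principalMultiplesLE (J ⊓ D) N | ∀ D' ∈ F, ¬ D' ∣ I} =
        {I ∈ {I ∈ principalMultiplesLE J N | ∀ D' ∈ F, ¬ D' ∣ I} | D ∣ I} := by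
      ext I
      simp only [Finset.mem_filter, mem_principalMultiplesLE, Ideal.dvd_iff_le, le_inf_iff]
      tauto
    rw [hnotdvd, hdvd, ← sub_div, sub_eq_iff_eq_add'.mpr]
    exact (Finset.sum_filter_add_sum_filter_not _ _ _).symm

end Cancellation

/-! ### Classes of bounded height -/

section Reduction

variable {K : Type*} [Field K] [NumberField K]

-- The library version of Hilbert 90 lives in `Type`, so `K` is first replaced by its image in `ℂ`.
lemma exists_div_algEquiv_eq_of_norm_eq_one [IsGalois ℚ K] {σ : K ≃ₐ[ℚ] K}
    (hσ : ∀ τ : K ≃ₐ[ℚ] K, τ ∈ Subgroup.zpowers σ) {x : K} (hx : Algebra.norm ℚ x = 1) :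
    ∃ y : K, y ≠ 0 ∧ y / σ y = x := by
  let φ : K →ₐ[ℚ] ℂ := IsAlgClosed.lift
  let e : K ≃ₐ[ℚ] φ.fieldRange := AlgEquiv.ofInjectiveField φ
  have : FiniteDimensional ℚ φ.fieldRange := e.toLinearEquiv.finiteDimensional
  have : IsGalois ℚ φ.fieldRange := IsGalois.of_algEquiv e
  have hgen (τ : φ.fieldRange ≃ₐ[ℚ] φ.fieldRange) : τ ∈ Subgroup.zpowers (e.autCongr σ) := by
    obtain ⟨n, hn⟩ := Subgroup.mem_zpowers_iff.mp (hσ (e.autCongr.symm τ))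
    exact Subgroup.mem_zpowers_iff.mpr
      ⟨n, by rw [← map_zpow, hn, MulEquiv.apply_symm_apply]⟩
  have : IsCyclic (φ.fieldRange ≃ₐ[ℚ] φ.fieldRange) := ⟨_, hgen⟩
  obtain ⟨y, hy⟩ := groupCohomology.exists_div_of_norm_eq_one hgen
    ((Algebra.norm_eq_of_algEquiv e x).trans hx)
  refine ⟨e.symm y, by simp, e.injective ?_⟩
  rw [← hy, map_div₀]
  simp

lemma norm_div_algEquiv (σ : K ≃ₐ[ℚ] K) {a : K} (ha : a ≠ 0) :
    Algebra.norm ℚ (a / σ a) = 1 := by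
  rw [div_eq_mul_inv, map_mul, Algebra.norm_inv, Algebra.norm_eq_of_algEquiv σ a,
    mul_inv_cancel₀ (Algebra.norm_ne_zero_iff.mpr ha)]

lemma mem_Ntilde_iff [IsGalois ℚ K] {σ : K ≃ₐ[ℚ] K}
    (hσ : ∀ τ : K ≃ₐ[ℚ] K, τ ∈ Subgroup.zpowers σ) {t : Torus K} :
    t ∈ Ntilde K ↔ ∃ a : 𝓞 K, a ≠ 0 ∧ logPi σ (a : K) = t := by
  constructor
  · rintro ⟨x, hx, hmem, rfl⟩
    obtain ⟨y, hy, rfl⟩ := exists_div_algEquiv_eq_of_norm_eq_one hσ hx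
    rw [mk_logMap_div_eq_logPi σ hy]
    exact exists_integer_logPi_eq σ hy
  · rintro ⟨a, ha, rfl⟩
    have ha' : (a : K) ≠ 0 := by simpa using ha
    exact ⟨(a : K) / σ (a : K), norm_div_algEquiv σ ha', logMap_div_algEquiv_mem_sumKer σ ha',
      (mk_logMap_div_eq_logPi σ ha' _).symm⟩

lemma hclass_eq_sInf (σ : K ≃ₐ[ℚ] K) (t : Torus K) :
    hclass K σ t =
      sInf {m | ∃ a : 𝓞 K, a ≠ 0 ∧ m = (Algebra.norm ℤ a).natAbs ∧ logPi σ (a : K) = t} := by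
  refine congrArg sInf (Set.ext fun m ↦ exists_congr fun a ↦ and_congr_right fun ha ↦
    and_congr_right fun _ ↦ ?_)
  have ha' : (a : K) ≠ 0 := by simpa using ha
  exact ⟨fun ⟨h, ht⟩ ↦ (mk_logMap_div_eq_logPi σ ha' h).symm.trans ht,
    fun ht ↦ ⟨logMap_div_algEquiv_mem_sumKer σ ha', (mk_logMap_div_eq_logPi σ ha' _).trans ht⟩⟩

open Classical in
/-- The finite set of classes `log π(α)` of nonzero integers `α` with `|N(α)| ≤ N`, that is, the
classes in `Ñ` of height at most `N`. -/
noncomputable def classesLE (σ : K ≃ₐ[ℚ] K) (N : ℕ) : Finset (Torus K) :=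
  (principalMultiplesLE (⊤ : Ideal (𝓞 K)) N).image (logPiIdeal σ)

lemma mem_principalMultiplesLE_top {N : ℕ} {I : Ideal (𝓞 K)} :
    I ∈ principalMultiplesLE ⊤ N ↔ I ≠ ⊥ ∧ Ideal.absNorm I ≤ N ∧ I.IsPrincipal := by
  rw [mem_principalMultiplesLE, and_assoc]
  simp only [← Ideal.one_eq_top, one_dvd, true_and]

lemma mem_classesLE {σ : K ≃ₐ[ℚ] K} {N : ℕ} {t : Torus K} :
    t ∈ classesLE σ N ↔
      ∃ a : 𝓞 K, a ≠ 0 ∧ (Algebra.norm ℤ a).natAbs ≤ N ∧ logPi σ (a : K) = t := by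
  classical
  rw [classesLE, Finset.mem_image]
  constructor
  · rintro ⟨I, hI, rfl⟩
    obtain ⟨hI, hIN, hI'⟩ := mem_principalMultiplesLE_top.mp hI
    obtain ⟨a, ha, rfl⟩ := exists_span_singleton_eq hI hI'
    exact ⟨a, ha, Ideal.absNorm_span_singleton a ▸ hIN, (logPiIdeal_span_singleton σ ha).symm⟩
  · rintro ⟨a, ha, haN, rfl⟩
    exact ⟨Ideal.span {a}, mem_principalMultiplesLE_top.mpr ⟨by simpa using ha,
      (Ideal.absNorm_span_singleton a).trans_le haN, ⟨⟨a, rfl⟩⟩⟩, logPiIdeal_span_singleton σ ha⟩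

lemma classesLE_zero (σ : K ≃ₐ[ℚ] K) : classesLE σ 0 = ∅ := by
  refine Finset.eq_empty_of_forall_notMem fun t ht ↦ ?_
  obtain ⟨a, ha, haN, -⟩ := mem_classesLE.mp ht
  exact ha (Algebra.norm_eq_zero_iff.mp (Int.natAbs_eq_zero.mp (Nat.le_zero.mp haN)))

lemma setOf_hclass_le_eq [IsGalois ℚ K] {σ : K ≃ₐ[ℚ] K}
    (hσ : ∀ τ : K ≃ₐ[ℚ] K, τ ∈ Subgroup.zpowers σ) (N : ℕ) :
    {t | t ∈ Ntilde K ∧ hclass K σ t ≤ N} = (classesLE σ N : Set (Torus K)) := by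
  ext t
  rw [Set.mem_ofPred_eq, mem_Ntilde_iff hσ, hclass_eq_sInf, Finset.mem_coe, mem_classesLE]
  constructor
  · rintro ⟨⟨a, ha, hat⟩, hN⟩
    obtain ⟨b, hb, hbm, hbt⟩ := Nat.sInf_mem (s := {m | ∃ a : 𝓞 K, a ≠ 0 ∧
      m = (Algebra.norm ℤ a).natAbs ∧ logPi σ (a : K) = t}) ⟨_, a, ha, rfl, hat⟩
    exact ⟨b, hb, hbm ▸ hN, hbt⟩
  · rintro ⟨a, ha, haN, hat⟩
    refine ⟨⟨a, ha, hat⟩, le_trans (Nat.sInf_le ?_) haN⟩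
    exact ⟨a, ha, rfl, hat⟩

lemma tendsto_weylSum_of_tendsto_classesLE [IsGalois ℚ K] {σ : K ≃ₐ[ℚ] K}
    (hσ : ∀ τ : K ≃ₐ[ℚ] K, τ ∈ Subgroup.zpowers σ) {χ : Torus K → ℂ}
    (h : Tendsto (fun N : ℕ ↦ (∑ t ∈ classesLE σ N, χ t) / N) atTop (𝓝 0)) :
    Tendsto (fun r : ℝ ↦
        (∑ᶠ t ∈ {t : Torus K | t ∈ Ntilde K ∧ (hclass K σ t : ℝ) < r}, χ t) / (r : ℂ))
      atTop (𝓝 0) := by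
  have hceil : Tendsto (fun r : ℝ ↦ ⌈r⌉₊ - 1) atTop atTop :=
    (tendsto_sub_atTop_nat 1).comp tendsto_nat_ceil_atTop
  refine squeeze_zero_norm' ((eventually_gt_atTop 0).mono fun r hr ↦ ?_)
    (tendsto_norm_zero.comp (h.comp hceil))
  have hceil_pos : 0 < ⌈r⌉₊ := Nat.ceil_pos.mpr hr
  have hset : {t : Torus K | t ∈ Ntilde K ∧ (hclass K σ t : ℝ) < r} =
      (classesLE σ (⌈r⌉₊ - 1) : Set (Torus K)) := by
    rw [← setOf_hclass_le_eq hσ]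
    ext t
    refine and_congr_right fun _ ↦ ?_
    rw [← Nat.lt_ceil]
    lia
  rw [hset, finsum_mem_coe_finset]
  simp only [Function.comp_apply, norm_div, Complex.norm_natCast, Complex.norm_real,
    Real.norm_of_nonneg hr.le]
  rcases (⌈r⌉₊ - 1).eq_zero_or_pos with hzero | hpos
  · simp [hzero, classesLE_zero]
  · have hle : ((⌈r⌉₊ - 1 : ℕ) : ℝ) ≤ r := (Nat.lt_ceil.mp (by lia)).le
    gcongr

lemma tendsto_sum_classesLE_of_tendsto_card {σ : K ≃ₐ[ℚ] K} (χ : AddChar (Torus K) Circle)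
    (h : Tendsto (fun N : ℕ ↦ ((classesLE σ N).card : ℝ) / N) atTop (𝓝 0)) :
    Tendsto (fun N : ℕ ↦ (∑ t ∈ classesLE σ N, (χ t : ℂ)) / N) atTop (𝓝 0) := by
  refine squeeze_zero_norm (fun N ↦ ?_) h
  rw [norm_div, Complex.norm_natCast]
  gcongr
  refine (norm_sum_le _ _).trans_eq ?_
  rw [Finset.sum_congr rfl fun t _ ↦ Circle.norm_coe (χ t), Finset.sum_const, nsmul_one]

end Reduction

open scoped Pointwise

/-! ### Invariant ideals -/

section GaloisAction

variable {K : Type*} [Field K] [NumberField K]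

lemma smul_span_singleton {G R : Type*} [Monoid G] [CommSemiring R] [MulSemiringAction G R] (g : G)
    (a : R) : g • Ideal.span {a} = Ideal.span {g • a} := by
  rw [Ideal.pointwise_smul_def, Ideal.map_span, Set.image_singleton,
    MulSemiringAction.toRingHom_apply]

lemma absNorm_smul (τ : K ≃ₐ[ℚ] K) (I : Ideal (𝓞 K)) :
    Ideal.absNorm (τ • I) = Ideal.absNorm I := by
  rw [← Ideal.absNorm_relNorm ℤ, Ideal.relNorm_smul, Ideal.absNorm_relNorm]

lemma exists_pow_isPrincipal {R : Type*} [CommRing R] [IsDedekindDomain R] [Finite (ClassGroup R)]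
    {I : Ideal R} (hI : I ≠ ⊥) : ∃ n ≠ 0, (I ^ n).IsPrincipal := by
  refine ⟨Nat.card (ClassGroup R), Nat.card_pos.ne', ?_⟩
  have h := pow_card_eq_one' (x := ClassGroup.mk0 ⟨I, mem_nonZeroDivisors_of_ne_zero hI⟩)
  rwa [← map_pow, ClassGroup.mk0_eq_one_iff] at h

lemma prod_smul_eq_norm [IsGalois ℚ K] (a : 𝓞 K) :
    ∏ τ : K ≃ₐ[ℚ] K, τ • a = (Algebra.norm ℤ a : 𝓞 K) := by
  apply RingOfIntegers.ext
  calc ((∏ τ : K ≃ₐ[ℚ] K, τ • a : 𝓞 K) : K) = ∏ τ : K ≃ₐ[ℚ] K, τ (a : K) :=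
        map_prod (algebraMap (𝓞 K) K) _ _
    _ = ((Algebra.norm ℤ a : 𝓞 K) : K) := by
        rw [← Algebra.norm_eq_prod_automorphisms ℚ (a : K), ← Algebra.coe_norm_int]
        simp

lemma prod_smul_span_singleton [IsGalois ℚ K] (a : 𝓞 K) :
    ∏ τ : K ≃ₐ[ℚ] K, τ • Ideal.span {a} =
      Ideal.span {(Ideal.absNorm (Ideal.span {a}) : 𝓞 K)} := by
  simp only [smul_span_singleton]
  rw [Ideal.prod_span_singleton, prod_smul_eq_norm, Ideal.absNorm_span_singleton,
    Ideal.span_singleton_eq_span_singleton]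
  simpa using (Int.associated_natAbs (Algebra.norm ℤ a)).map (algebraMap ℤ (𝓞 K))

lemma prod_smul_eq_span_absNorm [IsGalois ℚ K] {I : Ideal (𝓞 K)} (hI : I ≠ ⊥) :
    ∏ τ : K ≃ₐ[ℚ] K, τ • I = Ideal.span {(Ideal.absNorm I : 𝓞 K)} := by
  obtain ⟨n, hn, hprincipal⟩ := exists_pow_isPrincipal hI
  obtain ⟨a, -, ha⟩ := exists_span_singleton_eq (pow_ne_zero n hI) hprincipal
  apply pow_left_injective hn
  simp only [← Finset.prod_pow, ← smul_pow']
  rw [← ha, prod_smul_span_singleton, ha, map_pow, Ideal.span_singleton_pow, Nat.cast_pow]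

lemma pow_finrank_eq_of_smul_eq [IsGalois ℚ K] {σ : K ≃ₐ[ℚ] K}
    (hσ : ∀ τ : K ≃ₐ[ℚ] K, τ ∈ Subgroup.zpowers σ) {I : Ideal (𝓞 K)} (hI : I ≠ ⊥)
    (h : σ • I = I) :
    I ^ finrank ℚ K = Ideal.span {(Ideal.absNorm I : 𝓞 K)} := by
  have h_all (τ : K ≃ₐ[ℚ] K) : τ • I = I :=
    (Subgroup.zpowers_le (H := MulAction.stabilizer (K ≃ₐ[ℚ] K) I)).mpr h (hσ τ)
  simp only [← prod_smul_eq_span_absNorm hI, h_all, Finset.prod_const, Finset.card_univ,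
    ← Nat.card_eq_fintype_card, IsGalois.card_aut_eq_finrank]

lemma eq_of_absNorm_eq_of_smul_eq [IsGalois ℚ K] {σ : K ≃ₐ[ℚ] K}
    (hσ : ∀ τ : K ≃ₐ[ℚ] K, τ ∈ Subgroup.zpowers σ) {I J : Ideal (𝓞 K)} (hI : I ≠ ⊥) (hJ : J ≠ ⊥)
    (hσI : σ • I = I) (hσJ : σ • J = J) (h : Ideal.absNorm I = Ideal.absNorm J) : I = J := by
  apply pow_left_injective (finrank_pos (R := ℚ) (M := K)).ne'
  simp only [pow_finrank_eq_of_smul_eq hσ hI hσI, pow_finrank_eq_of_smul_eq hσ hJ hσJ, h]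

end GaloisAction

section InvariantIdeals

lemma exists_pow_mul_eq_of_dvd_factorization {d n D : ℕ} (hd : d ≠ 0) (hn : n ≠ 0) (hD : D ≠ 0)
    (h : ∀ p : ℕ, p.Prime → ¬ p ∣ D → d ∣ n.factorization p) :
    ∃ k m : ℕ, n = k ^ d * m ∧ m ∣ D ^ d := by
  obtain ⟨m, hm⟩ := Nat.floorRoot_pow_dvd (n := d) (a := n)
  obtain ⟨hk_ne, hm_ne⟩ := mul_ne_zero_iff.mp (hm ▸ hn)
  have hfactorization (p : ℕ) : m.factorization p = n.factorization p % d := by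
    have hp := congrArg (Nat.factorization · p) hm
    simp only [Nat.factorization_mul hk_ne hm_ne, Nat.factorization_pow, Finsupp.add_apply,
      Finsupp.smul_apply, Nat.factorization_floorRoot, Finsupp.floorDiv_apply, Nat.floorDiv_eq_div,
      smul_eq_mul] at hp
    exact Nat.add_left_cancel (hp.symm.trans (Nat.div_add_mod _ _).symm)
  refine ⟨_, m, hm, (Nat.factorization_prime_le_iff_dvd hm_ne (pow_ne_zero d hD)).mp
    fun p hp ↦ ?_⟩
  rw [hfactorization, Nat.factorization_pow, Finsupp.smul_apply, smul_eq_mul]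
  by_cases hpD : p ∣ D
  · exact (Nat.mod_lt _ (Nat.pos_of_ne_zero hd)).le.trans
      (Nat.le_mul_of_pos_right d (hp.factorization_pos_of_dvd hD hpD))
  · rw [Nat.mod_eq_zero_of_dvd (h p hp hpD)]
    exact Nat.zero_le _

variable {K : Type*} [Field K] [NumberField K] {p : ℕ} {P : Ideal (𝓞 K)}

lemma dvd_absNorm_of_dvd_span (hp : p.Prime) (hP : Prime P) (h : P ∣ Ideal.span {(p : 𝓞 K)}) :
    p ∣ Ideal.absNorm P := by
  have hne_one : Ideal.absNorm P ≠ 1 :=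
    Ideal.absNorm_eq_one_iff.not.mpr (Ideal.isUnit_iff.not.mp hP.not_isUnit)
  have hdvd : Ideal.absNorm P ∣ p ^ finrank ℤ (𝓞 K) :=
    Ideal.absNorm_span_natCast (S := 𝓞 K) p ▸ map_dvd Ideal.absNorm h
  obtain ⟨k, -, hk⟩ := (Nat.dvd_prime_pow hp).mp hdvd
  rw [hk] at hne_one ⊢
  exact dvd_pow_self p fun hk0 ↦ hne_one (by rw [hk0, pow_zero])

lemma exists_prime_dvd_span (K : Type*) [Field K] [NumberField K] {p : ℕ} (hp : p.Prime) :
    ∃ P : Ideal (𝓞 K), Prime P ∧ P ∣ Ideal.span {(p : 𝓞 K)} := by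
  have hunit : ¬ IsUnit (Ideal.span {(p : 𝓞 K)}) := by
    rw [Ideal.isUnit_iff, ← Ideal.absNorm_eq_one_iff, Ideal.absNorm_span_natCast]
    exact (Nat.one_lt_pow finrank_pos.ne' hp.one_lt).ne'
  obtain ⟨P, hP, hPp⟩ := WfDvdMonoid.exists_irreducible_factor hunit (by simpa using hp.ne_zero)
  exact ⟨P, hP.prime, hPp⟩

lemma not_sq_dvd_span (hp : p.Prime) (hP : Prime P)
    (hpD : ¬ p ∣ Ideal.absNorm (differentIdeal ℤ (𝓞 K))) : ¬ P ^ 2 ∣ Ideal.span {(p : 𝓞 K)} := by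
  intro h
  have : (Ideal.span {(p : ℤ)}).IsMaximal :=
    PrincipalIdealRing.isMaximal_of_irreducible (Nat.prime_iff_prime_int.mp hp).irreducible
  have hdvd := pow_sub_one_dvd_differentIdeal ℤ (p := Ideal.span {(p : ℤ)}) P 2
    (by simpa using hp.ne_zero) (by simpa [Ideal.map_span] using h)
  exact hpD ((dvd_absNorm_of_dvd_span hp hP ((dvd_pow_self P two_ne_zero).trans h)).trans
    (map_dvd Ideal.absNorm (by simpa using hdvd)))

lemma emultiplicity_span_eq_factorization (hp : p.Prime)
    (hpD : ¬ p ∣ Ideal.absNorm (differentIdeal ℤ (𝓞 K))) (hP : Prime P)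
    (hPp : P ∣ Ideal.span {(p : 𝓞 K)}) {n : ℕ} (hn : n ≠ 0) :
    emultiplicity P (Ideal.span {(n : 𝓞 K)}) = n.factorization p := by
  have hspan_p : emultiplicity P (Ideal.span {(p : 𝓞 K)}) = (1 : ℕ) :=
    emultiplicity_eq_coe.mpr ⟨by simpa using hPp, not_sq_dvd_span hp hP hpD⟩
  have hcompl : emultiplicity P (Ideal.span {((n / p ^ n.factorization p : ℕ) : 𝓞 K)}) = 0 := by
    refine emultiplicity_eq_zero.mpr fun h ↦ Nat.not_dvd_ordCompl hp hn (hp.dvd_of_dvd_pow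
      (n := finrank ℤ (𝓞 K)) ?_)
    rw [← Ideal.absNorm_span_natCast]
    exact (dvd_absNorm_of_dvd_span hp hP hPp).trans (map_dvd Ideal.absNorm h)
  conv_lhs => rw [← Nat.ordProj_mul_ordCompl_eq_self n p]
  rw [Nat.cast_mul, Nat.cast_pow, ← Ideal.span_singleton_mul_span_singleton,
    ← Ideal.span_singleton_pow, emultiplicity_mul hP, emultiplicity_pow hP, hspan_p, hcompl,
    Nat.cast_one, mul_one, add_zero]

variable [IsGalois ℚ K] {σ : K ≃ₐ[ℚ] K}

lemma finrank_dvd_factorization_absNorm (hσ : ∀ τ : K ≃ₐ[ℚ] K, τ ∈ Subgroup.zpowers σ)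
    {I : Ideal (𝓞 K)} (hI : I ≠ ⊥) (h : σ • I = I) (hp : p.Prime)
    (hpD : ¬ p ∣ Ideal.absNorm (differentIdeal ℤ (𝓞 K))) :
    finrank ℚ K ∣ (Ideal.absNorm I).factorization p := by
  obtain ⟨P, hP, hPp⟩ := exists_prime_dvd_span K hp
  have hmult := congrArg (emultiplicity P) (pow_finrank_eq_of_smul_eq hσ hI h)
  rw [emultiplicity_span_eq_factorization hp hpD hP hPp (absNorm_pos hI).ne', emultiplicity_pow hP,
    (FiniteMultiplicity.of_prime_left hP hI).emultiplicity_eq_multiplicity] at hmult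
  exact ⟨_, by exact_mod_cast hmult.symm⟩

-- Away from the different an invariant ideal is generated by a rational integer, so up to finitely
-- many cofactors its norm is a perfect `[K : ℚ]`-th power, and the norm determines the ideal.
lemma summable_inv_absNorm_of_smul_eq (hσ : ∀ τ : K ≃ₐ[ℚ] K, τ ∈ Subgroup.zpowers σ)
    (hK : 1 < finrank ℚ K) :
    Summable fun I : {I : Ideal (𝓞 K) // I ≠ ⊥ ∧ σ • I = I} ↦ 1 / (Ideal.absNorm I.1 : ℝ) := by
  let D := Ideal.absNorm (differentIdeal ℤ (𝓞 K))
  have hD : D ≠ 0 := (absNorm_pos differentIdeal_ne_bot).ne'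
  have hfactor (I : {I : Ideal (𝓞 K) // I ≠ ⊥ ∧ σ • I = I}) :
      ∃ x : ℕ × (D ^ finrank ℚ K).divisors, Ideal.absNorm I.1 = x.1 ^ finrank ℚ K * x.2 := by
    obtain ⟨k, m, hkm, hm⟩ := exists_pow_mul_eq_of_dvd_factorization finrank_pos.ne'
      (absNorm_pos I.2.1).ne' hD fun p hp ↦ finrank_dvd_factorization_absNorm hσ I.2.1 I.2.2 hp
    exact ⟨⟨k, m, Nat.mem_divisors.mpr ⟨hm, pow_ne_zero _ hD⟩⟩, hkm⟩
  choose f hf using hfactor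
  have hf_inj : Function.Injective f := fun I J h ↦ Subtype.ext <|
    eq_of_absNorm_eq_of_smul_eq hσ I.2.1 J.2.1 I.2.2 J.2.2 (by rw [hf, hf, h])
  have hsum : Summable fun x : ℕ × (D ^ finrank ℚ K).divisors ↦
      1 / (x.1 : ℝ) ^ finrank ℚ K * (1 / (x.2 : ℝ)) :=
    (Real.summable_one_div_nat_pow.mpr hK).mul_of_nonneg
      (g := fun m : (D ^ finrank ℚ K).divisors ↦ 1 / ((m : ℕ) : ℝ)) .of_finite
      (fun _ ↦ by positivity) (fun _ ↦ by positivity)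
  refine (hsum.comp_injective hf_inj).congr fun I ↦ ?_
  rw [Function.comp_apply, one_div_mul_one_div, hf I, Nat.cast_mul, Nat.cast_pow]

end InvariantIdeals

/-! ### Fields with a real place -/

section SieveLimit

variable {K : Type*} [Field K] [NumberField K]

open Classical in
lemma card_filter_exists_dvd_le {C : ℝ} (hC_pos : 0 < C)
    (hC : ∀ N, ((idealsLE K N).card : ℝ) ≤ C * N) {E : Finset (Ideal (𝓞 K))}
    (hE : ∀ d ∈ E, d ≠ ⊥) (N : ℕ) :
    (((idealsLE K N).filter fun I ↦ ∃ d ∈ E, d ∣ I).card : ℝ) ≤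
      C * N * ∑ d ∈ E, 1 / (Ideal.absNorm d : ℝ) := by
  have hcover : ((idealsLE K N).filter fun I ↦ ∃ d ∈ E, d ∣ I) ⊆
      E.biUnion fun d ↦ (idealsLE K N).filter (d ∣ ·) := fun I hI ↦ by
    obtain ⟨hIN, d, hd, hdI⟩ := Finset.mem_filter.mp hI
    exact Finset.mem_biUnion.mpr ⟨d, hd, Finset.mem_filter.mpr ⟨hIN, hdI⟩⟩
  calc (((idealsLE K N).filter fun I ↦ ∃ d ∈ E, d ∣ I).card : ℝ)
      ≤ ∑ d ∈ E, (((idealsLE K N).filter (d ∣ ·)).card : ℝ) := by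
        exact_mod_cast (Finset.card_le_card hcover).trans Finset.card_biUnion_le
    _ ≤ ∑ d ∈ E, C * N * (1 / (Ideal.absNorm d : ℝ)) :=
        Finset.sum_le_sum fun d hd ↦ card_filter_dvd_idealsLE_le hC_pos hC (hE d hd) N
    _ = C * N * ∑ d ∈ E, 1 / (Ideal.absNorm d : ℝ) := (Finset.mul_sum ..).symm

open Classical in
lemma norm_sum_sieve_sub_le {C ε : ℝ} (hC_pos : 0 < C)
    (hC : ∀ N, ((idealsLE K N).card : ℝ) ≤ C * N) {D : Set (Ideal (𝓞 K))} (hD : ∀ d ∈ D, d ≠ ⊥)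
    {s : Finset D} (hs : ∀ t : Finset D, Disjoint t s →
      ‖∑ d ∈ t, 1 / (Ideal.absNorm d.1 : ℝ)‖ < ε)
    {N : ℕ} {S : Finset (Ideal (𝓞 K))} (hS : S ⊆ idealsLE K N) {u : Ideal (𝓞 K) → ℂ}
    (hu : ∀ I, ‖u I‖ ≤ 1) :
    ‖∑ I ∈ S with ∀ d ∈ D, ¬ d ∣ I, u I -
      ∑ I ∈ S with ∀ d ∈ s.image Subtype.val, ¬ d ∣ I, u I‖ ≤ C * N * ε := by
  set F := s.image Subtype.val
  have hFD : ∀ d ∈ F, d ∈ D := fun d hd ↦ by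
    obtain ⟨x, -, rfl⟩ := Finset.mem_image.mp hd
    exact x.2
  let E := (idealsLE K N).filter fun d ↦ d ∈ D ∧ d ∉ F
  have hE : ∀ d ∈ E, d ∈ D := fun d hd ↦ (Finset.mem_filter.mp hd).2.1
  have hsub : S.filter (fun I ↦ ∀ d ∈ D, ¬ d ∣ I) ⊆ S.filter fun I ↦ ∀ d ∈ F, ¬ d ∣ I :=
    Finset.monotone_filter_right S fun I _ hI d hd ↦ hI d (hFD d hd)
  have hdiff : S.filter (fun I ↦ ∀ d ∈ F, ¬ d ∣ I) \ S.filter (fun I ↦ ∀ d ∈ D, ¬ d ∣ I) ⊆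
      (idealsLE K N).filter fun I ↦ ∃ d ∈ E, d ∣ I := fun I hI ↦ by
    simp only [Finset.mem_sdiff, Finset.mem_filter, not_and, not_forall, not_not] at hI
    obtain ⟨⟨hIS, hIF⟩, hID⟩ := hI
    obtain ⟨d, hd, hdI⟩ := hID hIS
    have hIN := mem_idealsLE.mp (hS hIS)
    refine Finset.mem_filter.mpr ⟨hS hIS, d, Finset.mem_filter.mpr
      ⟨mem_idealsLE.mpr ⟨hD d hd, ?_⟩, hd, fun hdF ↦ hIF d hdF hdI⟩, hdI⟩
    exact (Nat.le_of_dvd (absNorm_pos hIN.1) (map_dvd Ideal.absNorm hdI)).trans hIN.2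
  have htail : ∑ d ∈ E, 1 / (Ideal.absNorm d : ℝ) ≤ ε := by
    rw [← Finset.sum_subtype_of_mem (fun d : Ideal (𝓞 K) ↦ 1 / (Ideal.absNorm d : ℝ)) hE]
    refine (le_abs_self _).trans (hs _ (Finset.disjoint_left.mpr fun d hd hds ↦ ?_)).le
    exact (Finset.mem_filter.mp (Finset.mem_subtype.mp hd)).2.2 (Finset.mem_image_of_mem _ hds)
  rw [← Finset.sum_sdiff hsub, sub_add_cancel_right, norm_neg]
  calc _ ≤ _ := norm_sum_le_of_le _ fun I _ ↦ hu I
    _ = ((S.filter (fun I ↦ ∀ d ∈ F, ¬ d ∣ I) \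
          S.filter (fun I ↦ ∀ d ∈ D, ¬ d ∣ I)).card : ℝ) := by rw [Finset.sum_const, nsmul_one]
    _ ≤ (((idealsLE K N).filter fun I ↦ ∃ d ∈ E, d ∣ I).card : ℝ) := by
        exact_mod_cast Finset.card_le_card hdiff
    _ ≤ C * N * ∑ d ∈ E, 1 / (Ideal.absNorm d : ℝ) :=
        card_filter_exists_dvd_le hC_pos hC (fun d hd ↦ hD d (hE d hd)) N
    _ ≤ C * N * ε := by gcongr

open Classical in
lemma tendsto_sum_sieve_div_of_summable {D : Set (Ideal (𝓞 K))} (hD : ∀ d ∈ D, d ≠ ⊥)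
    (hsum : Summable fun d : D ↦ 1 / (Ideal.absNorm d.1 : ℝ)) {S : ℕ → Finset (Ideal (𝓞 K))}
    (hS : ∀ N, S N ⊆ idealsLE K N) {u : Ideal (𝓞 K) → ℂ} (hu : ∀ I, ‖u I‖ ≤ 1)
    (h : ∀ F : Finset (Ideal (𝓞 K)), (∀ d ∈ F, d ∈ D) → Tendsto
      (fun N : ℕ ↦ (∑ I ∈ S N with ∀ d ∈ F, ¬ d ∣ I, u I) / N) atTop (𝓝 0)) :
    Tendsto (fun N : ℕ ↦ (∑ I ∈ S N with ∀ d ∈ D, ¬ d ∣ I, u I) / N) atTop (𝓝 0) := by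
  obtain ⟨C, hC_pos, hC⟩ := exists_card_idealsLE_le K
  refine tendsto_zero_of_forall_exists_norm_sub_le fun ε hε ↦ ?_
  obtain ⟨s, hs⟩ := summable_iff_vanishing_norm.mp hsum (ε / C) (by positivity)
  refine ⟨_, h (s.image Subtype.val) (by simp +contextual), (eventually_gt_atTop 0).mono
    fun N hN ↦ ?_⟩
  rw [← sub_div, norm_div, Complex.norm_natCast, div_le_iff₀ (by exact_mod_cast hN)]
  refine (norm_sum_sieve_sub_le hC_pos hC hD hs (hS N) hu).trans_eq ?_
  field_simp

end SieveLimit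

section RealPlace

variable {K : Type*} [Field K] [NumberField K]

lemma place_eq_of_logMap_eq {a b : K} (ha : a ≠ 0) (hb : b ≠ 0) (h : logMap K a = logMap K b)
    (w : InfinitePlace K) : w a = w b := by
  have ha' : 0 < w a := InfinitePlace.pos_iff.mpr ha
  have hb' : 0 < w b := InfinitePlace.pos_iff.mpr hb
  exact (pow_left_inj₀ ha'.le hb'.le mult_pos.ne').mp
    (Real.log_injOn_pos (pow_pos ha' _) (pow_pos hb' _) (congrFun h w))

lemma eq_or_eq_neg_of_isReal {w : InfinitePlace K} (hw : w.IsReal) {a b : K} (h : w a = w b) :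
    a = b ∨ a = -b := by
  rw [← norm_embedding_of_isReal hw, ← norm_embedding_of_isReal hw, Real.norm_eq_abs,
    Real.norm_eq_abs, abs_eq_abs, ← map_neg] at h
  exact h.imp (fun h ↦ (embedding_of_isReal hw).injective h)
    fun h ↦ (embedding_of_isReal hw).injective h

variable {σ : K ≃ₐ[ℚ] K} {w : InfinitePlace K} {a b : 𝓞 K}

lemma smul_span_mul_span_eq_of_logPi_eq (hw : w.IsReal) (ha : a ≠ 0) (hb : b ≠ 0)
    (h : logPi σ (a : K) = logPi σ (b : K)) :
    σ • Ideal.span {a} * Ideal.span {b} = σ • Ideal.span {b} * Ideal.span {a} := by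
  have ha' : (a : K) ≠ 0 := by simpa using ha
  have hb' : (b : K) ≠ 0 := by simpa using hb
  have hσa : σ (a : K) ≠ 0 := by simpa using ha
  have hσb : σ (b : K) ≠ 0 := by simpa using hb
  obtain ⟨u, hu⟩ := mem_logUnits_iff.mp (QuotientAddGroup.eq.mp h)
  have hu0 : ((u : 𝓞 K) : K) ≠ 0 := by simp
  rw [AddSubgroup.coe_add, AddSubgroup.coe_neg, coe_coboundary_logMap σ ha',
    coe_coboundary_logMap σ hb', logMap_div ha' hσa, logMap_div hb' hσb] at hu
  have hlog : logMap K (σ (a : K) * b) = logMap K ((u : 𝓞 K) * (σ (b : K) * a)) := by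
    rw [logMap_mul hσa hb', logMap_mul hu0 (mul_ne_zero hσb ha'), logMap_mul hσb ha', ← hu]
    abel
  have hplace := place_eq_of_logMap_eq (mul_ne_zero hσa hb')
    (mul_ne_zero hu0 (mul_ne_zero hσb ha')) hlog w
  rw [smul_span_singleton, smul_span_singleton, Ideal.span_singleton_mul_span_singleton,
    Ideal.span_singleton_mul_span_singleton, Ideal.span_singleton_eq_span_singleton]
  have hassoc : Associated ((u : 𝓞 K) * (σ • b * a)) (σ • b * a) :=
    associated_unit_mul_left _ _ u.isUnit
  rcases eq_or_eq_neg_of_isReal hw hplace with heq | heq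
  · rwa [show σ • a * b = u * (σ • b * a) from RingOfIntegers.ext heq]
  · rw [show σ • a * b = -(u * (σ • b * a)) from RingOfIntegers.ext heq]
    exact hassoc.neg_left

lemma smul_eq_of_isCoprime {G R : Type*} [Group G] [CommRing R] [IsDedekindDomain R]
    [MulSemiringAction G R] {g : G} {I J : Ideal R} (hIJ : IsCoprime I J)
    (h : g • I * J = g • J * I) : g • I = I := by
  have hgIJ : IsCoprime (g • I) (g • J) := by
    obtain ⟨x, y, hxy⟩ := hIJ
    exact ⟨g • x, g • y, by rw [← smul_mul', ← smul_mul', ← smul_add, hxy, smul_one]⟩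
  exact dvd_antisymm (hgIJ.dvd_of_dvd_mul_left (h ▸ dvd_mul_right _ _))
    (hIJ.dvd_of_dvd_mul_right (h ▸ dvd_mul_left _ _))

lemma exists_common_factor_of_logPi_eq (hw : w.IsReal) (ha : a ≠ 0) (hb : b ≠ 0)
    (h : logPi σ (a : K) = logPi σ (b : K)) :
    ∃ g d e : Ideal (𝓞 K), Ideal.span {a} = g * d ∧ Ideal.span {b} = g * e ∧
      σ • d = d ∧ σ • e = e := by
  obtain ⟨d, e, hd, he, hde⟩ := extract_gcd (Ideal.span {a}) (Ideal.span {b})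
  set g := gcd (Ideal.span {a}) (Ideal.span {b})
  have hg : g ≠ ⊥ := fun hg ↦ ha (by simpa [hg] using hd)
  have hcop : IsCoprime d e := Ideal.isCoprime_iff_gcd.mpr (isUnit_iff_eq_one.mp hde)
  have hswap : σ • d * e = σ • e * d := by
    refine mul_left_cancel₀ (mul_ne_zero ((smul_ne_zero_iff_ne σ).mpr hg) hg) ?_
    have hab := smul_span_mul_span_eq_of_logPi_eq hw ha hb h
    rw [hd, he, smul_mul', smul_mul'] at hab
    calc σ • g * g * (σ • d * e) = σ • g * σ • d * (g * e) := by ring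
      _ = σ • g * g * (σ • e * d) := by rw [hab]; ring
  exact ⟨g, d, e, hd, he, smul_eq_of_isCoprime hcop hswap,
    smul_eq_of_isCoprime hcop.symm hswap.symm⟩

/-- The `σ`-invariant ideals `d` such that no principal multiple of `d` has least norm in its class:
if `d ∣ (x)`, then `b x / a` is an integer of smaller norm in the class of `x`. -/
def removableIdeals (σ : K ≃ₐ[ℚ] K) : Set (Ideal (𝓞 K)) :=
  {d | d ≠ ⊥ ∧ σ • d = d ∧ ∃ a b : 𝓞 K, a ≠ 0 ∧ b ≠ 0 ∧ logPi σ (a : K) = logPi σ (b : K) ∧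
    Ideal.absNorm (Ideal.span {b}) < Ideal.absNorm (Ideal.span {a}) ∧
    Ideal.span {a} ∣ Ideal.span {b} * d}

lemma exists_absNorm_lt_of_mem_removableIdeals {x : 𝓞 K} (hx : x ≠ 0) {d : Ideal (𝓞 K)}
    (hd : d ∈ removableIdeals σ) (hdx : d ∣ Ideal.span {x}) :
    ∃ y : 𝓞 K, y ≠ 0 ∧ logPi σ (y : K) = logPi σ (x : K) ∧
      Ideal.absNorm (Ideal.span {y}) < Ideal.absNorm (Ideal.span {x}) := by
  obtain ⟨-, -, a, b, ha, hb, hab, hlt, hdvd⟩ := hd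
  obtain ⟨y, hy⟩ : a ∣ b * x := by
    rw [← Ideal.span_singleton_le_span_singleton, ← Ideal.dvd_iff_le,
      ← Ideal.span_singleton_mul_span_singleton]
    exact hdvd.trans (mul_dvd_mul_left _ hdx)
  have hy0 : y ≠ 0 := right_ne_zero_of_mul (hy ▸ mul_ne_zero hb hx)
  refine ⟨y, hy0, ?_, ?_⟩
  · refine add_left_cancel (a := logPi σ (a : K)) ?_
    rw [← logPi_integer_mul σ ha hy0, ← hy, logPi_integer_mul σ hb hx, hab]
  · have hnorm : Ideal.absNorm (Ideal.span {b}) * Ideal.absNorm (Ideal.span {x}) =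
        Ideal.absNorm (Ideal.span {a}) * Ideal.absNorm (Ideal.span {y}) := by
      simp only [← map_mul, Ideal.span_singleton_mul_span_singleton, hy]
    have hypos : 0 < Ideal.absNorm (Ideal.span {y}) := absNorm_pos (by simpa using hy0)
    by_contra! hle
    exact hnorm.not_lt (Nat.mul_lt_mul_of_lt_of_le hlt hle hypos)

lemma exists_mem_removableIdeals_dvd (hw : w.IsReal) (ha : a ≠ 0) (hb : b ≠ 0)
    (h : logPi σ (a : K) = logPi σ (b : K))
    (hlt : Ideal.absNorm (Ideal.span {b}) < Ideal.absNorm (Ideal.span {a})) :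
    ∃ d ∈ removableIdeals σ, d ∣ Ideal.span {a} := by
  obtain ⟨g, d, e, hgd, hge, hσd, -⟩ := exists_common_factor_of_logPi_eq hw ha hb h
  have hd : d ≠ ⊥ := fun hd ↦ ha (by simpa [hd] using hgd)
  refine ⟨d, ⟨hd, hσd, a, b, ha, hb, h, hlt, e, ?_⟩, hgd ▸ dvd_mul_left d g⟩
  rw [hgd, hge]
  ring

lemma exists_minimal_absNorm {t : Torus K} {N : ℕ} (ht : t ∈ classesLE σ N) :
    ∃ a : 𝓞 K, a ≠ 0 ∧ logPi σ (a : K) = t ∧ Ideal.absNorm (Ideal.span {a}) ≤ N ∧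
      ∀ b : 𝓞 K, b ≠ 0 → logPi σ (b : K) = t →
        Ideal.absNorm (Ideal.span {a}) ≤ Ideal.absNorm (Ideal.span {b}) := by
  obtain ⟨c, hc, hcN, hct⟩ := mem_classesLE.mp ht
  obtain ⟨a, ⟨ha, hat⟩, hmin⟩ := exists_minimalFor_of_wellFoundedLT
    (fun a : 𝓞 K ↦ a ≠ 0 ∧ logPi σ (a : K) = t) (fun a ↦ Ideal.absNorm (Ideal.span {a}))
    ⟨c, hc, hct⟩
  have hmin' (b : 𝓞 K) (hb : b ≠ 0) (hbt : logPi σ (b : K) = t) :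
      Ideal.absNorm (Ideal.span {a}) ≤ Ideal.absNorm (Ideal.span {b}) :=
    le_of_not_gt fun hlt ↦ hlt.not_ge (hmin ⟨hb, hbt⟩ hlt.le)
  exact ⟨a, ha, hat, ((hmin' c hc hct).trans_eq (Ideal.absNorm_span_singleton c)).trans hcN, hmin'⟩

variable [IsGalois ℚ K]

lemma span_eq_span_of_logPi_eq_of_absNorm_eq
    (hσ : ∀ τ : K ≃ₐ[ℚ] K, τ ∈ Subgroup.zpowers σ) (hw : w.IsReal) (ha : a ≠ 0) (hb : b ≠ 0)
    (h : logPi σ (a : K) = logPi σ (b : K))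
    (hnorm : Ideal.absNorm (Ideal.span {a}) = Ideal.absNorm (Ideal.span {b})) :
    Ideal.span {a} = Ideal.span {b} := by
  obtain ⟨g, d, e, hgd, hge, hσd, hσe⟩ := exists_common_factor_of_logPi_eq hw ha hb h
  have hg : g ≠ ⊥ := fun hg ↦ ha (by simpa [hg] using hgd)
  have hd : d ≠ ⊥ := fun hd ↦ ha (by simpa [hd] using hgd)
  have he : e ≠ ⊥ := fun he ↦ hb (by simpa [he] using hge)
  rw [hgd, hge, map_mul, map_mul] at hnorm
  rw [hgd, hge, eq_of_absNorm_eq_of_smul_eq hσ hd he hσd hσe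
    (Nat.eq_of_mul_eq_mul_left (absNorm_pos hg) hnorm)]

-- The ideals on the right are the principal ideals of least norm of the classes on the left.
open Classical in
lemma sum_classesLE_eq_sum_sieve (hσ : ∀ τ : K ≃ₐ[ℚ] K, τ ∈ Subgroup.zpowers σ) (hw : w.IsReal)
    (f : Torus K → ℂ) (N : ℕ) :
    ∑ t ∈ classesLE σ N, f t =
      ∑ I ∈ principalMultiplesLE ⊤ N with ∀ d ∈ removableIdeals σ, ¬ d ∣ I,
        f (logPiIdeal σ I) := by
  symm
  refine Finset.sum_bij (fun I _ ↦ logPiIdeal σ I)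
    (fun I hI ↦ Finset.mem_image_of_mem _ (Finset.mem_filter.mp hI).1) ?_ ?_ fun _ _ ↦ rfl
  · intro I hI J hJ hIJ
    simp only [Finset.mem_filter, mem_principalMultiplesLE_top] at hI hJ
    obtain ⟨⟨hI0, -, hI'⟩, hI⟩ := hI
    obtain ⟨⟨hJ0, -, hJ'⟩, hJ⟩ := hJ
    obtain ⟨a, ha, rfl⟩ := exists_span_singleton_eq hI0 hI'
    obtain ⟨b, hb, rfl⟩ := exists_span_singleton_eq hJ0 hJ'
    simp only [logPiIdeal_span_singleton σ ha, logPiIdeal_span_singleton σ hb] at hIJ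
    rcases lt_trichotomy (Ideal.absNorm (Ideal.span {b})) (Ideal.absNorm (Ideal.span {a}))
      with hlt | heq | hgt
    · obtain ⟨d, hd, hda⟩ := exists_mem_removableIdeals_dvd hw ha hb hIJ hlt
      exact absurd hda (hI d hd)
    · exact span_eq_span_of_logPi_eq_of_absNorm_eq hσ hw ha hb hIJ heq.symm
    · obtain ⟨d, hd, hdb⟩ := exists_mem_removableIdeals_dvd hw hb ha hIJ.symm hgt
      exact absurd hdb (hJ d hd)
  · intro t ht
    obtain ⟨a, ha, rfl, haN, hmin⟩ := exists_minimal_absNorm ht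
    refine ⟨Ideal.span {a}, ?_, logPiIdeal_span_singleton σ ha⟩
    simp only [Finset.mem_filter, mem_principalMultiplesLE_top]
    refine ⟨⟨by simpa using ha, haN, ⟨⟨a, rfl⟩⟩⟩, fun d hd hda ↦ ?_⟩
    obtain ⟨c, hc, hct, hlt⟩ := exists_absNorm_lt_of_mem_removableIdeals ha hd hda
    exact (hmin c hc hct).not_gt hlt

lemma one_lt_finrank (hσ : ∀ τ : K ≃ₐ[ℚ] K, τ ∈ Subgroup.zpowers σ)
    {χ : AddChar (Torus K) Circle} (hχ : Continuous χ) (hχ_ne : χ ≠ 1) : 1 < finrank ℚ K := by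
  by_contra! hle
  have hcard : Nat.card (K ≃ₐ[ℚ] K) ≤ 1 := (IsGalois.card_aut_eq_finrank ℚ K).trans_le hle
  have hσ_one : σ = 1 := (Finite.card_le_one_iff_subsingleton.mp hcard).elim σ 1
  obtain ⟨γ, hγ, hχγ⟩ := exists_integer_logPi_ne_one hσ hχ hχ_ne
  have hzero : logPi σ (γ : K) = 0 :=
    logPi_eq_zero_of_algEquiv_eq_self (by simpa using hγ) (by simp [hσ_one])
  exact hχγ (by rw [hzero, AddChar.map_zero_eq_one])

lemma tendsto_sum_classesLE_of_isReal (hσ : ∀ τ : K ≃ₐ[ℚ] K, τ ∈ Subgroup.zpowers σ)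
    (hw : w.IsReal) {χ : AddChar (Torus K) Circle} (hχ : Continuous χ) (hχ_ne : χ ≠ 1) :
    Tendsto (fun N : ℕ ↦ (∑ t ∈ classesLE σ N, (χ t : ℂ)) / N) atTop (𝓝 0) := by
  have hD : ∀ d ∈ removableIdeals σ, d ≠ ⊥ := fun d hd ↦ hd.1
  have hinj : Function.Injective fun d : removableIdeals σ ↦
      (⟨d.1, d.2.1, d.2.2.1⟩ : {I : Ideal (𝓞 K) // I ≠ ⊥ ∧ σ • I = I}) :=
    fun d e hde ↦ Subtype.ext (Subtype.mk.inj hde)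
  have hsum := (summable_inv_absNorm_of_smul_eq hσ (one_lt_finrank hσ hχ hχ_ne)).comp_injective hinj
  have hlim := tendsto_sum_sieve_div_of_summable hD hsum (S := principalMultiplesLE ⊤)
    (u := fun I ↦ (χ (logPiIdeal σ I) : ℂ))
    (fun N I hI ↦ mem_idealsLE.mpr (mem_principalMultiplesLE.mp hI).1)
    (fun I ↦ (Circle.norm_coe _).le) fun F hF ↦
      tendsto_sum_principalMultiplesLE_sieve_div hσ hχ hχ_ne F (fun d hd ↦ hD d (hF d hd))
        top_ne_bot
  exact hlim.congr fun N ↦ by rw [sum_classesLE_eq_sum_sieve hσ hw fun t ↦ (χ t : ℂ)]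

end RealPlace

/-! ### Divergence of the sum of reciprocal norms of primes -/

section PrimeSieve

lemma tendsto_natDiv_div {m : ℕ} :
    Tendsto (fun N : ℕ ↦ ((N / m : ℕ) : ℝ) / N) atTop (𝓝 (1 / m)) :=
  ((tendsto_nat_floor_mul_div_atTop (R := ℝ) (a := 1 / m) (by positivity)).comp
    tendsto_natCast_atTop_atTop).congr fun N ↦ by
      rw [Function.comp_apply, one_div_mul_eq_div, Nat.floor_div_natCast, Nat.floor_natCast]

lemma tendsto_comp_natDiv_div {u : ℕ → ℝ} {L : ℝ}
    (hu : Tendsto (fun N : ℕ ↦ u N / N) atTop (𝓝 L)) {m : ℕ} (hm : 0 < m) :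
    Tendsto (fun N : ℕ ↦ u (N / m) / N) atTop (𝓝 (L * (1 / m))) := by
  refine ((hu.comp (Nat.tendsto_div_const_atTop hm.ne')).mul tendsto_natDiv_div).congr' ?_
  filter_upwards [eventually_ge_atTop m] with N hN
  exact div_mul_div_cancel₀ (Nat.cast_ne_zero.mpr (Nat.div_pos hN hm).ne')

lemma exp_neg_two_mul_le_one_sub {x : ℝ} (hx : 0 ≤ x) (hx' : x ≤ 1 / 2) :
    Real.exp (-(2 * x)) ≤ 1 - x := by
  have hpos : 0 < 1 - x := by linarith
  rw [← Real.le_log_iff_exp_le hpos]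
  refine le_trans ?_ (Real.one_sub_inv_le_log_of_pos hpos)
  rw [neg_le_sub_iff_le_add, inv_le_iff_one_le_mul₀ hpos]
  nlinarith

variable {K : Type*} [Field K] [NumberField K]

open Classical in
/-- The finite set of nonzero ideals of norm at most `N` divisible by no member of `Q`. -/
noncomputable def sieveLE (Q : Finset (Ideal (𝓞 K))) (N : ℕ) : Finset (Ideal (𝓞 K)) :=
  (idealsLE K N).filter fun I ↦ ∀ P ∈ Q, ¬ P ∣ I

lemma mem_sieveLE {Q : Finset (Ideal (𝓞 K))} {N : ℕ} {I : Ideal (𝓞 K)} :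
    I ∈ sieveLE Q N ↔ (I ≠ ⊥ ∧ Ideal.absNorm I ≤ N) ∧ ∀ P ∈ Q, ¬ P ∣ I := by
  simp only [sieveLE, Finset.mem_filter, mem_idealsLE]

lemma eq_of_prime_dvd_prime {P Q : Ideal (𝓞 K)} (hP : Prime P) (hQ : Prime Q) (h : P ∣ Q) :
    P = Q :=
  associated_iff_eq.mp ((hP.dvd_prime_iff_associated hQ).mp h)

open Classical in
lemma filter_dvd_sieveLE {Q : Finset (Ideal (𝓞 K))} (hQ : ∀ P ∈ Q, Prime P) {P : Ideal (𝓞 K)}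
    (hP : Prime P) (hPQ : P ∉ Q) (N : ℕ) :
    (sieveLE Q N).filter (P ∣ ·) = (sieveLE Q (N / Ideal.absNorm P)).image (P * ·) := by
  have hdvd (R) (hR : R ∈ Q) (I : Ideal (𝓞 K)) : R ∣ P * I ↔ R ∣ I := by
    refine ⟨fun h ↦ ((hQ R hR).dvd_or_dvd h).resolve_left fun hRP ↦ hPQ ?_, fun h ↦ h.mul_left P⟩
    rwa [← eq_of_prime_dvd_prime (hQ R hR) hP hRP]
  rw [sieveLE, Finset.filter_comm, filter_dvd_idealsLE hP.ne_zero, Finset.filter_image, sieveLE]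
  congr 1
  exact Finset.filter_congr fun I _ ↦ forall₂_congr fun R hR ↦ not_congr (hdvd R hR I)

open Classical in
lemma card_sieveLE_insert_add {Q : Finset (Ideal (𝓞 K))} (hQ : ∀ P ∈ Q, Prime P)
    {P : Ideal (𝓞 K)} (hP : Prime P) (hPQ : P ∉ Q) (N : ℕ) :
    (sieveLE (insert P Q) N).card + (sieveLE Q (N / Ideal.absNorm P)).card =
      (sieveLE Q N).card := by
  have hinsert : sieveLE (insert P Q) N = (sieveLE Q N).filter (¬ P ∣ ·) := by
    ext I
    simp only [mem_sieveLE, Finset.mem_filter, Finset.forall_mem_insert]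
    tauto
  rw [hinsert,
    ← Finset.card_image_of_injective (sieveLE Q (N / _)) (mul_right_injective₀ hP.ne_zero),
    ← filter_dvd_sieveLE hQ hP hPQ, add_comm, Finset.card_filter_add_card_filter_not]

lemma tendsto_card_sieveLE_div {Q : Finset (Ideal (𝓞 K))} (hQ : ∀ P ∈ Q, Prime P) :
    Tendsto (fun N : ℕ ↦ ((sieveLE Q N).card : ℝ) / N) atTop
      (𝓝 (dedekindZeta_residue K * ∏ P ∈ Q, (1 - 1 / (Ideal.absNorm P : ℝ)))) := by
  classical
  induction Q using Finset.induction_on with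
  | empty => simpa [sieveLE] using tendsto_card_idealsLE_div K
  | insert P Q hPQ ih =>
    obtain ⟨hP, hQ⟩ := Finset.forall_mem_insert _ _ _ |>.mp hQ
    have hlim := (ih hQ).sub (tendsto_comp_natDiv_div (ih hQ) (absNorm_pos hP.ne_zero))
    rw [Finset.prod_insert hPQ]
    convert hlim using 2 with N
    · rw [← sub_div, ← card_sieveLE_insert_add hQ hP hPQ N, Nat.cast_add, add_sub_cancel_right]
    · ring

lemma two_le_absNorm {P : Ideal (𝓞 K)} (hP : Prime P) : 2 ≤ Ideal.absNorm P :=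
  (Nat.two_le_iff _).mpr ⟨(absNorm_pos hP.ne_zero).ne',
    Ideal.absNorm_eq_one_iff.not.mpr (Ideal.isUnit_iff.not.mp hP.not_isUnit)⟩

lemma exp_neg_le_prod_one_sub {Q : Finset (Ideal (𝓞 K))} (hQ : ∀ P ∈ Q, Prime P) :
    Real.exp (-(2 * ∑ P ∈ Q, 1 / (Ideal.absNorm P : ℝ))) ≤
      ∏ P ∈ Q, (1 - 1 / (Ideal.absNorm P : ℝ)) := by
  rw [Finset.mul_sum, ← Finset.sum_neg_distrib, Real.exp_sum]
  refine Finset.prod_le_prod (fun _ _ ↦ (Real.exp_pos _).le) fun P hP ↦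
    exp_neg_two_mul_le_one_sub (by positivity) (one_div_le_one_div_of_le two_pos ?_)
  exact_mod_cast two_le_absNorm (hQ P hP)

lemma prod_one_sub_le_exp_neg {Q : Finset (Ideal (𝓞 K))} (hQ : ∀ P ∈ Q, Prime P) :
    ∏ P ∈ Q, (1 - 1 / (Ideal.absNorm P : ℝ)) ≤
      Real.exp (-∑ P ∈ Q, 1 / (Ideal.absNorm P : ℝ)) := by
  rw [← Finset.sum_neg_distrib, Real.exp_sum]
  refine Finset.prod_le_prod (fun P hP ↦ sub_nonneg.mpr ?_) fun P _ ↦ Real.one_sub_le_exp_neg _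
  rw [one_div]
  exact inv_le_one_of_one_le₀ (by exact_mod_cast one_le_two.trans (two_le_absNorm (hQ P hP)))

open Classical in
lemma card_sieveLE_le {C ε : ℝ} (hC_pos : 0 < C) (hC : ∀ N, ((idealsLE K N).card : ℝ) ≤ C * N)
    {s : Finset {P : Ideal (𝓞 K) | Prime P}}
    (hs : ∀ t : Finset {P : Ideal (𝓞 K) | Prime P}, Disjoint t s →
      ‖∑ P ∈ t, 1 / (Ideal.absNorm P.1 : ℝ)‖ < ε) (N : ℕ) :
    ((sieveLE (s.image Subtype.val) N).card : ℝ) ≤ 1 + C * N * ε := by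
  have hall : ((idealsLE K N).filter fun I ↦ ∀ P ∈ {P : Ideal (𝓞 K) | Prime P}, ¬ P ∣ I) ⊆
      {⊤} := fun I hI ↦ by
    obtain ⟨hIN, hI⟩ := Finset.mem_filter.mp hI
    by_contra hne
    obtain ⟨P, hP, hPI⟩ := WfDvdMonoid.exists_irreducible_factor
      (Ideal.isUnit_iff.not.mpr (Finset.mem_singleton.not.mp hne)) (mem_idealsLE.mp hIN).1
    exact hI P hP.prime hPI
  have hdiff := norm_sum_sieve_sub_le hC_pos hC (fun P hP ↦ Prime.ne_zero hP) hs
    (Finset.Subset.refl (idealsLE K N)) (u := 1) fun _ ↦ norm_one.le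
  simp only [Pi.one_apply, Finset.sum_const, nsmul_one] at hdiff
  rw [norm_sub_rev] at hdiff
  calc ((sieveLE (s.image Subtype.val) N).card : ℝ)
      = ‖((sieveLE (s.image Subtype.val) N).card : ℂ)‖ := (Complex.norm_natCast _).symm
    _ ≤ _ := norm_le_norm_add_norm_sub' _ _
    _ ≤ 1 + C * N * ε := by
        refine add_le_add ?_ hdiff
        rw [Complex.norm_natCast]
        exact_mod_cast Finset.card_le_card hall

variable (K) in
-- The ideals surviving the sieve by a finite set `Q` of primes have density `ρ ∏ (1 - 1 / NP)`.
-- Were the sum convergent, this would stay bounded away from zero as `Q` grows, although sieving by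
-- all primes leaves only the unit ideal.
lemma not_summable_inv_absNorm_prime :
    ¬ Summable fun P : {P : Ideal (𝓞 K) | Prime P} ↦ 1 / (Ideal.absNorm P.1 : ℝ) := by
  classical
  intro hsum
  obtain ⟨C, hC_pos, hC⟩ := exists_card_idealsLE_le K
  set L := Real.exp (-(2 * ∑' P : {P : Ideal (𝓞 K) | Prime P}, 1 / (Ideal.absNorm P.1 : ℝ)))
  have hρ := dedekindZeta_residue_pos K
  have hL : 0 < L := Real.exp_pos _
  obtain ⟨s, hs⟩ := summable_iff_vanishing_norm.mp hsum (dedekindZeta_residue K * L / (2 * C))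
    (by positivity)
  have hQ : ∀ P ∈ s.image Subtype.val, Prime P := fun P hP ↦ by
    obtain ⟨P, -, rfl⟩ := Finset.mem_image.mp hP
    exact P.2
  have hL_le : L ≤ ∏ P ∈ s.image Subtype.val, (1 - 1 / (Ideal.absNorm P : ℝ)) := by
    refine le_trans (Real.exp_le_exp.mpr ?_) (exp_neg_le_prod_one_sub hQ)
    rw [Finset.sum_image Subtype.val_injective.injOn]
    gcongr
    exact hsum.sum_le_tsum s fun _ _ ↦ by positivity
  have hlimit_le : dedekindZeta_residue K *
      ∏ P ∈ s.image Subtype.val, (1 - 1 / (Ideal.absNorm P : ℝ)) ≤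
        0 + C * (dedekindZeta_residue K * L / (2 * C)) := by
    refine le_of_tendsto_of_tendsto (tendsto_card_sieveLE_div hQ)
      (tendsto_one_div_atTop_nhds_zero_nat.add_const _) ?_
    filter_upwards [eventually_gt_atTop 0] with N hN
    rw [div_le_iff₀ (Nat.cast_pos.mpr hN)]
    refine (card_sieveLE_le hC_pos hC hs N).trans_eq ?_
    field_simp
  have hhalf : C * (dedekindZeta_residue K * L / (2 * C)) = dedekindZeta_residue K * L / 2 := by
    field_simp
  nlinarith [mul_le_mul_of_nonneg_left hL_le hρ.le, mul_pos hρ hL]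

end PrimeSieve

section HalfOfThePrimes

lemma summable_subtype_of_subset_union {α : Type*} {f : α → ℝ} (hf : 0 ≤ f) {s t u : Set α}
    (h : s ⊆ t ∪ u) (ht : Summable fun x : t ↦ f x) (hu : Summable fun x : u ↦ f x) :
    Summable fun x : s ↦ f x := by
  have hnonneg (v : Set α) : 0 ≤ v.indicator f := Set.indicator_nonneg fun x _ ↦ hf x
  rw [← Function.comp_def, summable_subtype_iff_indicator] at ht hu ⊢
  refine .of_nonneg_of_le (hnonneg s) (fun x ↦ ?_) (ht.add hu)
  by_cases hxs : x ∈ s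
  · rcases h hxs with hx | hx
    · rw [Set.indicator_of_mem hxs, Set.indicator_of_mem hx]
      exact le_add_of_nonneg_right (hnonneg u x)
    · rw [Set.indicator_of_mem hxs, Set.indicator_of_mem hx]
      exact le_add_of_nonneg_left (hnonneg t x)
  · rw [Set.indicator_of_notMem hxs]
    exact add_nonneg (hnonneg t x) (hnonneg u x)

variable {K : Type*} [Field K] [NumberField K]

lemma prime_smul (τ : K ≃ₐ[ℚ] K) {P : Ideal (𝓞 K)} (hP : Prime P) : Prime (τ • P) := by
  have := Ideal.isPrime_of_prime hP
  exact Ideal.prime_of_isPrime (smul_ne_zero_iff_ne τ |>.mpr hP.ne_zero) inferInstance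

lemma sq_absNorm_under_le {P : Ideal (𝓞 K)} (hP : Prime P) (h : ¬ (Ideal.absNorm P).Prime) :
    Ideal.absNorm (P.under ℤ) ^ 2 ≤ Ideal.absNorm P := by
  have := Ideal.isPrime_of_prime hP
  have : NeZero P := ⟨hP.ne_zero⟩
  have hp := Nat.absNorm_under_prime P
  have hdvd : Ideal.absNorm P ∣ Ideal.absNorm (P.under ℤ) ^ finrank ℤ (𝓞 K) := by
    rw [← Ideal.absNorm_span_natCast]
    exact map_dvd Ideal.absNorm (Ideal.dvd_span_singleton.mpr (Int.absNorm_under_mem P))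
  obtain ⟨k, -, hk⟩ := (Nat.dvd_prime_pow hp).mp hdvd
  rw [hk]
  refine Nat.pow_le_pow_right hp.pos ((Nat.two_le_iff k).mpr ⟨?_, ?_⟩)
  · rintro rfl
    exact absurd (two_le_absNorm hP) (by simp [hk])
  · rintro rfl
    exact h (by rwa [hk, pow_one])

variable (K) in
lemma summable_inv_absNorm_of_not_prime [IsGalois ℚ K] :
    Summable fun P : {P : Ideal (𝓞 K) | Prime P ∧ ¬ (Ideal.absNorm P).Prime} ↦
      1 / (Ideal.absNorm P.1 : ℝ) := by
  let S := {P : Ideal (𝓞 K) | Prime P ∧ ¬ (Ideal.absNorm P).Prime}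
  let p (P : S) : ℕ := Ideal.absNorm (P.1.under ℤ)
  have hconj (P : S) :
      ∃ τ : K ≃ₐ[ℚ] K, P.1 = τ • (Set.rangeSplitting p ⟨p P, P, rfl⟩).1 := by
    have := Ideal.isPrime_of_prime P.2.1
    have := Ideal.isPrime_of_prime (Set.rangeSplitting p ⟨p P, P, rfl⟩).2.1
    refine Algebra.IsInvariant.exists_smul_of_under_eq ℤ (𝓞 K) (K ≃ₐ[ℚ] K) _ _ ?_
    rw [← Int.ideal_span_absNorm_eq_self (P.1.under ℤ),
      ← Int.ideal_span_absNorm_eq_self (Ideal.under ℤ _)]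
    exact congrArg (fun n : ℕ ↦ Ideal.span {(n : ℤ)}) (Set.apply_rangeSplitting p _)
  choose τ hτ using hconj
  have hinj : Function.Injective fun P : S ↦ (p P, τ P) := fun P Q h ↦ by
    obtain ⟨hp, hτ_eq⟩ := Prod.mk.inj h
    apply Subtype.ext
    rw [hτ P, hτ Q, hτ_eq]
    simp only [hp]
  have hsum : Summable fun x : ℕ × (K ≃ₐ[ℚ] K) ↦ 1 / (x.1 : ℝ) ^ 2 * 1 :=
    (Real.summable_one_div_nat_pow.mpr one_lt_two).mul_of_nonneg
      (g := fun _ : K ≃ₐ[ℚ] K ↦ (1 : ℝ)) .of_finite (fun _ ↦ by positivity) fun _ ↦ zero_le_one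
  refine .of_nonneg_of_le (fun _ ↦ by positivity) (fun P ↦ ?_) (hsum.comp_injective hinj)
  have := Ideal.isPrime_of_prime P.2.1
  have : NeZero P.1 := ⟨P.2.1.ne_zero⟩
  have hp_pos : 0 < p P := (Nat.absNorm_under_prime P.1).pos
  rw [Function.comp_apply, mul_one]
  exact one_div_le_one_div_of_le (by positivity) (by exact_mod_cast sq_absNorm_under_le P.2.1 P.2.2)

lemma exists_intCast_sub_mem {P : Ideal (𝓞 K)} (h : (Ideal.absNorm P).Prime) (x : 𝓞 K) :
    ∃ n : ℤ, x - n ∈ P := by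
  have : Fact (Ideal.absNorm P).Prime := ⟨h⟩
  have hcard : Nat.card (𝓞 K ⧸ P) = Ideal.absNorm P := rfl
  have : Nontrivial (𝓞 K ⧸ P) := Ideal.Quotient.nontrivial_iff.mpr fun htop ↦
    h.one_lt.ne' (Ideal.absNorm_eq_one_iff.mpr htop)
  obtain ⟨n, hn⟩ := AddSubgroup.mem_zmultiples_iff.mp
    (mem_zmultiples_of_prime_card hcard one_ne_zero (g' := Ideal.Quotient.mk P x))
  exact ⟨n, by rw [← Ideal.Quotient.eq, ← hn]; simp⟩

lemma smul_sub_mem_of_smul_eq {P : Ideal (𝓞 K)} (h : (Ideal.absNorm P).Prime) {c : K ≃ₐ[ℚ] K}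
    (hc : c • P = P) (x : 𝓞 K) : c • x - x ∈ P := by
  obtain ⟨n, hn⟩ := exists_intCast_sub_mem h x
  have hcn : c • (x - n) ∈ P := hc ▸ Ideal.smul_mem_pointwise_smul c _ _ hn
  have hfix : c • (n : 𝓞 K) = n := map_intCast (MulSemiringAction.toRingHom _ (𝓞 K) c) n
  rw [smul_sub, hfix] at hcn
  simpa using P.sub_mem hcn hn

lemma exists_smul_ne {c : K ≃ₐ[ℚ] K} (hc : c ≠ 1) : ∃ x : 𝓞 K, c • x ≠ x := by
  contrapose! hc
  ext y
  obtain ⟨a, b, -, rfl⟩ := IsFractionRing.div_surjective (A := 𝓞 K) y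
  have hfix (x : 𝓞 K) : c (algebraMap (𝓞 K) K x) = algebraMap (𝓞 K) K x :=
    congrArg (algebraMap (𝓞 K) K) (hc x)
  rw [map_div₀, hfix, hfix, AlgEquiv.one_apply]

lemma summable_inv_absNorm_prime_of_smul_eq [IsGalois ℚ K] {c : K ≃ₐ[ℚ] K} (hc : c ≠ 1) :
    Summable fun P : {P : Ideal (𝓞 K) | Prime P ∧ c • P = P} ↦ 1 / (Ideal.absNorm P.1 : ℝ) := by
  obtain ⟨x, hx⟩ := exists_smul_ne hc
  have : Finite {P : Ideal (𝓞 K) | P ∣ Ideal.span {c • x - x}} :=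
    @Finite.of_fintype _ (UniqueFactorizationMonoid.fintypeSubtypeDvd _
      (Ideal.span_singleton_eq_bot.not.mpr (sub_ne_zero.mpr hx)))
  refine summable_subtype_of_subset_union (f := fun P ↦ 1 / (Ideal.absNorm P : ℝ))
    (fun _ ↦ by positivity) (fun P hP ↦ ?_)
    (.of_finite : Summable fun P : {P : Ideal (𝓞 K) | P ∣ Ideal.span {c • x - x}} ↦ _)
    (summable_inv_absNorm_of_not_prime K)
  by_cases h : (Ideal.absNorm P).Prime
  · exact .inl (Ideal.dvd_span_singleton.mpr (smul_sub_mem_of_smul_eq h hP.2 x))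
  · exact .inr ⟨hP.1, h⟩

/-- A set of primes containing exactly one of `P` and `c • P` for each prime `P` not fixed by the
involution `c`; the choice is made by an arbitrary well-order. -/
def halfPrimes (c : K ≃ₐ[ℚ] K) : Set (Ideal (𝓞 K)) := {P | Prime P ∧ WellOrderingRel P (c • P)}

lemma smul_notMem_halfPrimes {c : K ≃ₐ[ℚ] K} (hcc : c * c = 1) {P : Ideal (𝓞 K)}
    (hP : P ∈ halfPrimes c) : c • P ∉ halfPrimes c := fun hcP ↦ by
  have h := hcP.2
  rw [smul_smul, hcc, one_smul] at h
  exact asymm hP.2 h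

lemma not_summable_inv_absNorm_halfPrimes [IsGalois ℚ K] {c : K ≃ₐ[ℚ] K} (hc : c ≠ 1)
    (hcc : c * c = 1) : ¬ Summable fun P : halfPrimes c ↦ 1 / (Ideal.absNorm P.1 : ℝ) := by
  intro hsum
  have hcP (P : Ideal (𝓞 K)) : c • c • P = P := by rw [smul_smul, hcc, one_smul]
  have hinj : Function.Injective
      fun P : {P : Ideal (𝓞 K) | c • P ∈ halfPrimes c} ↦ (⟨c • P.1, P.2⟩ : halfPrimes c) :=
    fun P Q h ↦ Subtype.ext (MulAction.injective c (Subtype.mk.inj h))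
  have hsum_conj : Summable fun P : {P : Ideal (𝓞 K) | c • P ∈ halfPrimes c} ↦
      1 / (Ideal.absNorm P.1 : ℝ) :=
    (hsum.comp_injective hinj).congr fun P ↦ by simp only [Function.comp_apply, absNorm_smul]
  have hnonneg : 0 ≤ fun P : Ideal (𝓞 K) ↦ 1 / (Ideal.absNorm P : ℝ) := fun _ ↦ by positivity
  refine not_summable_inv_absNorm_prime K (summable_subtype_of_subset_union hnonneg (fun P hP ↦ ?_)
    (summable_subtype_of_subset_union hnonneg subset_rfl hsum hsum_conj)
    (summable_inv_absNorm_prime_of_smul_eq hc))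
  rcases trichotomous_of WellOrderingRel P (c • P) with h | h | h
  · exact .inl (.inl ⟨hP, h⟩)
  · exact .inr ⟨hP, h.symm⟩
  · exact .inl (.inr ⟨prime_smul c hP, by rwa [hcP]⟩)

lemma exists_finset_prod_one_sub_lt [IsGalois ℚ K] {c : K ≃ₐ[ℚ] K} (hc : c ≠ 1) (hcc : c * c = 1)
    {ε : ℝ} (hε : 0 < ε) :
    ∃ Q : Finset (Ideal (𝓞 K)), (∀ P ∈ Q, Prime P) ∧ (∀ P ∈ Q, c • P ∉ Q) ∧
      ∏ P ∈ Q, (1 - 1 / (Ideal.absNorm P : ℝ)) < ε := by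
  classical
  obtain ⟨s, hs⟩ : ∃ s : Finset (halfPrimes c),
      -Real.log ε < ∑ P ∈ s, 1 / (Ideal.absNorm P.1 : ℝ) := by
    by_contra! h
    exact not_summable_inv_absNorm_halfPrimes hc hcc
      (summable_of_sum_le (fun _ ↦ by positivity) h)
  have hQ : ∀ P ∈ s.image Subtype.val, P ∈ halfPrimes c := fun P hP ↦ by
    obtain ⟨P, -, rfl⟩ := Finset.mem_image.mp hP
    exact P.2
  refine ⟨s.image Subtype.val, fun P hP ↦ (hQ P hP).1,
    fun P hP hcP ↦ smul_notMem_halfPrimes hcc (hQ P hP) (hQ _ hcP),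
    (prod_one_sub_le_exp_neg fun P hP ↦ (hQ P hP).1).trans_lt ?_⟩
  rw [← Real.lt_log_iff_exp_lt hε, Finset.sum_image Subtype.val_injective.injOn]
  exact neg_lt.mp hs

end HalfOfThePrimes

/-! ### Fields without a real place -/

section Torsion

lemma finite_setOf_nsmul_eq_zero {A : Type*} [AddCommGroup A] [IsAddTorsionFree A]
    (L : AddSubgroup A) [AddGroup.FG L] {n : ℕ} (hn : n ≠ 0) :
    {t : A ⧸ L | n • t = 0}.Finite := by
  have := AddSubgroup.finiteIndex_range_nsmulAddMonoidHom_of_fg L hn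
  have hlift (t : {t : A ⧸ L | n • t = 0}) : ∃ x : A, (x : A ⧸ L) = t ∧ n • x ∈ L := by
    obtain ⟨x, hx⟩ := QuotientAddGroup.mk_surjective t.1
    refine ⟨x, hx, (QuotientAddGroup.eq_zero_iff _).mp ?_⟩
    rw [QuotientAddGroup.mk_nsmul, hx]
    exact t.2
  choose x hx hxL using hlift
  refine Set.finite_coe_iff.mp (Finite.of_injective (fun t ↦
    ((⟨n • x t, hxL t⟩ : L) : L ⧸ (nsmulAddMonoidHom (α := L) n).range)) fun s t hst ↦ ?_)
  obtain ⟨y, hy⟩ := QuotientAddGroup.eq.mp hst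
  have hsub : n • (y : A) = n • (-x s + x t) := by
    simpa [smul_add] using congrArg Subtype.val hy
  apply Subtype.ext
  rw [← hx s, ← hx t, QuotientAddGroup.eq, ← nsmul_right_injective hn hsub]
  exact y.2

variable {K : Type*} [Field K] [NumberField K]

lemma logMap_units_mem_sumKer (u : (𝓞 K)ˣ) : logMap K ((u : 𝓞 K) : K) ∈ sumKer K := by
  change ∑ w, logMap K ((u : 𝓞 K) : K) w = 0
  simpa only [logMap, Real.log_pow] using Units.sum_mult_mul_log u

instance : AddGroup.FG (logUnits K) := by
  let f : Additive (𝓞 K)ˣ →+ logUnits K :=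
    { toFun u := ⟨⟨_, logMap_units_mem_sumKer u.toMul⟩, mem_logUnits_iff.mpr ⟨u.toMul, rfl⟩⟩
      map_zero' := by ext; simp [logMap_one]
      map_add' u v := by ext; simp [logMap_mul] }
  have : AddGroup.FG (Additive (𝓞 K)ˣ) := AddGroup.fg_iff_addMonoid_fg.mpr inferInstance
  refine AddGroup.fg_of_surjective (f := f) fun x ↦ ?_
  obtain ⟨u, hu⟩ := mem_logUnits_iff.mp x.2
  exact ⟨.ofMul u, Subtype.ext (Subtype.ext hu.symm)⟩

end Torsion

section ComplexPlaces

variable {K : Type*} [Field K] [NumberField K] {c : K ≃ₐ[ℚ] K}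

-- Trading each prime factor `P ∈ Q` of `I` for `c • P` does not change `I * c • I`.
lemma exists_mul_smul_eq_of_forall_not_dvd (hcc : c * c = 1) {Q : Finset (Ideal (𝓞 K))}
    (hQ : ∀ P ∈ Q, Prime P) (hcQ : ∀ P ∈ Q, c • P ∉ Q) {I : Ideal (𝓞 K)} (hI : I ≠ ⊥) :
    ∃ J ≠ ⊥, Ideal.absNorm J = Ideal.absNorm I ∧ J * c • J = I * c • I ∧ ∀ P ∈ Q, ¬ P ∣ J := by
  induction I using UniqueFactorizationMonoid.induction_on_prime with
  | h₁ => exact absurd rfl hI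
  | h₂ I hI_unit => exact ⟨I, hI, rfl, rfl, fun P hP h ↦ (hQ P hP).not_isUnit
      (isUnit_of_dvd_unit h hI_unit)⟩
  | h₃ I R hI_ne hR ih =>
    obtain ⟨J, hJ, hnorm, hmul, hdvd⟩ := ih hI_ne
    obtain ⟨S, hS, hSnorm, hSmul, hSQ⟩ : ∃ S, Prime S ∧ Ideal.absNorm S = Ideal.absNorm R ∧
        S * c • S = R * c • R ∧ S ∉ Q := by
      by_cases hRQ : R ∈ Q
      · exact ⟨c • R, prime_smul c hR, absNorm_smul c R,
          by rw [smul_smul, hcc, one_smul, mul_comm], hcQ R hRQ⟩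
      · exact ⟨R, hR, rfl, rfl, hRQ⟩
    refine ⟨S * J, mul_ne_zero hS.ne_zero hJ, by rw [map_mul, map_mul, hSnorm, hnorm], ?_,
      fun P hP h ↦ ((hQ P hP).dvd_or_dvd h).elim (fun hPS ↦ hSQ ?_) (hdvd P hP)⟩
    · rw [smul_mul', smul_mul', mul_mul_mul_comm, hSmul, hmul, mul_mul_mul_comm]
    · rwa [← eq_of_prime_dvd_prime (hQ P hP) hS hPS]

open Classical in
lemma image_mul_smul_subset (hcc : c * c = 1) {Q : Finset (Ideal (𝓞 K))}
    (hQ : ∀ P ∈ Q, Prime P) (hcQ : ∀ P ∈ Q, c • P ∉ Q) (N : ℕ) :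
    (idealsLE K N).image (fun I ↦ I * c • I) ⊆ (sieveLE Q N).image fun I ↦ I * c • I := by
  intro I' hI'
  obtain ⟨I, hI, rfl⟩ := Finset.mem_image.mp hI'
  obtain ⟨hI, hIN⟩ := mem_idealsLE.mp hI
  obtain ⟨J, hJ, hnorm, hmul, hdvd⟩ := exists_mul_smul_eq_of_forall_not_dvd hcc hQ hcQ hI
  exact Finset.mem_image.mpr ⟨J, mem_sieveLE.mpr ⟨⟨hJ, hnorm.trans_le hIN⟩, hdvd⟩, hmul⟩

open Classical in
lemma tendsto_card_image_mul_smul_div [IsGalois ℚ K] (hc : c ≠ 1) (hcc : c * c = 1) :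
    Tendsto (fun N : ℕ ↦ (((idealsLE K N).image fun I ↦ I * c • I).card : ℝ) / N) atTop
      (𝓝 0) := by
  have hρ := dedekindZeta_residue_pos K
  refine tendsto_order.mpr ⟨fun ε hε ↦ .of_forall fun N ↦ hε.trans_le (by positivity),
    fun ε hε ↦ ?_⟩
  obtain ⟨Q, hQ, hcQ, hlt⟩ := exists_finset_prod_one_sub_lt hc hcc (div_pos hε hρ)
  filter_upwards [(tendsto_card_sieveLE_div hQ).eventually_lt_const
    ((lt_div_iff₀' hρ).mp hlt)] with N hN
  refine lt_of_le_of_lt ?_ hN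
  refine div_le_div_of_nonneg_right (Nat.cast_le.mpr ?_) N.cast_nonneg
  exact (Finset.card_le_card (image_mul_smul_subset hcc hQ hcQ N)).trans Finset.card_image_le

lemma exists_isConj [IsGalois ℚ K] (φ : K →+* ℂ) :
    ∃ c : K ≃ₐ[ℚ] K, ComplexEmbedding.IsConj φ c := by
  obtain ⟨τ, hτ⟩ := NumberField.ComplexEmbedding.exists_comp_symm_eq_of_comp_eq (k := ℚ) φ
    (ComplexEmbedding.conjugate φ) (Subsingleton.elim _ _)
  exact ⟨τ.symm, hτ.symm⟩

variable {σ : K ≃ₐ[ℚ] K}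

lemma smul_eq_of_isConj [IsGalois ℚ K] (hσ : ∀ τ : K ≃ₐ[ℚ] K, τ ∈ Subgroup.zpowers σ)
    {w : InfinitePlace K} (hc : ComplexEmbedding.IsConj w.embedding c) (v : InfinitePlace K) :
    c • v = v := by
  have hcw : c • w = w := by
    rw [← MulAction.mem_stabilizer_iff, ← mk_embedding w, mem_stabilizer_mk_iff]
    exact .inr hc
  obtain ⟨τ, rfl⟩ := exists_smul_eq_of_comap_eq (k := ℚ) (w := w) (w' := v) (Subsingleton.elim _ _)
  obtain ⟨⟨m, rfl⟩, ⟨n, rfl⟩⟩ := And.intro (hσ c) (hσ τ)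
  rw [smul_smul, ((Commute.refl σ).zpow_zpow m n).eq, mul_smul, hcw]

lemma logPi_algEquiv_eq (hc : ∀ v : InfinitePlace K, c • v = v) (a : K) :
    logPi σ (c a) = logPi σ a := by
  have : logMap K (c a) = logMap K a := by
    ext w
    rw [logMap_algEquiv, inv_smul_eq_iff.mpr (hc w).symm]
  rw [logPi, this, logPi]

open Classical in
lemma image_two_nsmul_classesLE_subset (hc : ∀ v : InfinitePlace K, c • v = v) (N : ℕ) :
    (classesLE σ N).image (2 • ·) ⊆
      ((idealsLE K N).image fun I ↦ I * c • I).image (logPiIdeal σ) := by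
  rw [Finset.image_image]
  intro s hs
  obtain ⟨t, ht, rfl⟩ := Finset.mem_image.mp hs
  obtain ⟨a, ha, haN, rfl⟩ := mem_classesLE.mp ht
  have hca : c • a ≠ 0 := smul_ne_zero_iff_ne c |>.mpr ha
  refine Finset.mem_image.mpr ⟨Ideal.span {a}, mem_idealsLE.mpr ⟨by simpa using ha,
    (Ideal.absNorm_span_singleton a).trans_le haN⟩, ?_⟩
  rw [Function.comp_apply, smul_span_singleton, Ideal.span_singleton_mul_span_singleton,
    logPiIdeal_span_singleton σ (mul_ne_zero ha hca), logPi_integer_mul σ ha hca, two_nsmul]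
  exact congrArg _ (logPi_algEquiv_eq hc (a : K))

lemma card_le_card_torsion_mul_card_image {A : Type*} [AddCommGroup A] [DecidableEq A] {n : ℕ}
    (hfin : {t : A | n • t = 0}.Finite) (s : Finset A) :
    s.card ≤ hfin.toFinset.card * (s.image (n • ·)).card := by
  refine Finset.card_le_mul_card_image s _ fun a ha ↦ ?_
  obtain ⟨t, -, rfl⟩ := Finset.mem_image.mp ha
  refine Finset.card_le_card_of_injOn (· - t) (fun x hx ↦ ?_) sub_left_injective.injOn
  rw [Finset.mem_coe, Set.Finite.mem_toFinset, Set.mem_ofPred_eq, smul_sub,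
    (Finset.mem_filter.mp hx).2, sub_self]

-- Complex conjugation `c` commutes with `σ`, so `2 log π(α) = log π(α c(α))` only depends on the
-- ideal `(α) c(α)`, and such ideals are sparse.
lemma tendsto_card_classesLE_div [IsGalois ℚ K]
    (hσ : ∀ τ : K ≃ₐ[ℚ] K, τ ∈ Subgroup.zpowers σ) (hreal : ¬ ∃ w : InfinitePlace K, w.IsReal) :
    Tendsto (fun N : ℕ ↦ ((classesLE σ N).card : ℝ) / N) atTop (𝓝 0) := by
  classical
  obtain ⟨w⟩ : Nonempty (InfinitePlace K) := inferInstance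
  obtain ⟨c, hconj⟩ := exists_isConj w.embedding
  have hc : c ≠ 1 := (ComplexEmbedding.isConj_ne_one_iff hconj).mpr
    fun h ↦ hreal ⟨w, isReal_iff.mpr h⟩
  have hcc : c * c = 1 := AlgEquiv.ext (ComplexEmbedding.isConj_apply_apply hconj)
  have hfin : {t : Torus K | 2 • t = 0}.Finite :=
    finite_setOf_nsmul_eq_zero (logUnits K) two_ne_zero
  have hlim := (tendsto_card_image_mul_smul_div hc hcc).const_mul (hfin.toFinset.card : ℝ)
  rw [mul_zero] at hlim
  refine squeeze_zero (fun N ↦ by positivity) (fun N ↦ ?_) hlim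
  rw [← mul_div_assoc]
  gcongr
  exact_mod_cast (card_le_card_torsion_mul_card_image hfin _).trans (Nat.mul_le_mul_left _
    ((Finset.card_le_card (image_two_nsmul_classesLE_subset (smul_eq_of_isConj hσ hconj) N)).trans
      Finset.card_image_le))

end ComplexPlaces

/-- The unimodular multiplicative function `χ` as a circle-valued additive character. -/
noncomputable def circleChar {A : Type*} [AddMonoid A] (χ : A → ℂ)
    (hmul : ∀ s t, χ (s + t) = χ s * χ t) (habs : ∀ t, ‖χ t‖ = 1) : AddChar A Circle where
  toFun t := ⟨χ t, mem_sphere_zero_iff_norm.mpr (habs t)⟩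
  map_zero_eq_one' := by
    have hne : χ 0 ≠ 0 := norm_ne_zero_iff.mp ((habs 0).trans_ne one_ne_zero)
    exact Circle.ext (mul_left_cancel₀ hne (by simpa using (hmul 0 0).symm))
  map_add_eq_mul' s t := Circle.ext (hmul s t)

end WeylSum

/-- For every nontrivial continuous character `χ : T → 𝕋` (realized as a
continuous multiplicative map into the unit circle of `ℂ`), the Weyl sums satisfy
`Σ_{β̃ ∈ Ñ(r)} χ(β̃) = o(r)` as `r → ∞`. -/
theorem weyl_sum_little_o
    (K : Type*) [Field K] [NumberField K] [IsGalois ℚ K]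
    (σ : K ≃ₐ[ℚ] K) (hσ : ∀ τ : K ≃ₐ[ℚ] K, τ ∈ Subgroup.zpowers σ)
    (χ : Torus K → ℂ) (hχcont : Continuous χ)
    (hχmul : ∀ s t : Torus K, χ (s + t) = χ s * χ t)
    (hχabs : ∀ t : Torus K, ‖χ t‖ = 1)
    (hχnontriv : ∃ t : Torus K, χ t ≠ 1) :
    Filter.Tendsto
      (fun r : ℝ =>
        (∑ᶠ t ∈ {t : Torus K | t ∈ Ntilde K ∧ (hclass K σ t : ℝ) < r}, χ t) / (r : ℂ))
      Filter.atTop (nhds 0) := by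
  let ψ : AddChar (Torus K) Circle := WeylSum.circleChar χ hχmul hχabs
  have hψ : Continuous ψ := hχcont.subtype_mk _
  have hψ_ne : ψ ≠ 1 := by
    obtain ⟨t, ht⟩ := hχnontriv
    exact AddChar.ne_one_iff.mpr ⟨t, fun h ↦ ht (congrArg Subtype.val h)⟩
  have hψχ (t : Torus K) : χ t = ψ t := rfl
  apply WeylSum.tendsto_weylSum_of_tendsto_classesLE hσ
  simp only [hψχ]
  by_cases hreal : ∃ w : InfinitePlace K, w.IsReal
  · obtain ⟨w, hw⟩ := hreal
    exact WeylSum.tendsto_sum_classesLE_of_isReal hσ hw hψ hψ_ne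
  · exact WeylSum.tendsto_sum_classesLE_of_tendsto_card ψ
      (WeylSum.tendsto_card_classesLE_div hσ hreal)
end
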